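/- arXiv:1407.8380 — 2 statements merged into one kernel-verified Lean document; each statement's English description precedes it below -/
import Mathlib

section
/- Let f,g:ℝⁿ→ℝⁿ be smooth vector fields, V:ℝⁿ→ℝ smooth, u₁,u₂∈ℝ, ρ>0, and set X:=f+u₁g, Y:=f+u₂g, A₀:=ρX+Y, A₁:=[Y,X]. Let x₀∈ℝⁿ and define m(t):=V(X_{ρt}(Y_t(x₀))) for t≥0 small enough that both flows are defined, where X_t(z), Y_t(z) denote the flows of ẋ=X(x) and ẏ=Y(y) from z at time 0. Then m is twice differentiable at t=0 and m″(0) = (A₀²V)(x₀) + ρ(A₁V)(x₀), where (A₀²V):=A₀(A₀V). -/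
open MeasureTheory Filter Set

noncomputable section

/-- `Euc n` is the Euclidean state space `ℝⁿ`. -/
abbrev Euc (n : ℕ) : Type := EuclideanSpace ℝ (Fin n)

/-- A control is admissible if it is measurable and locally essentially bounded. -/
def AdmissibleControl {U : Type*} [NormedAddCommGroup U] [MeasurableSpace U]
    (u : ℝ → U) : Prop :=
  Measurable u ∧ ∀ T : ℝ, ∃ C : ℝ, ∀ᵐ t ∂(volume.restrict (Icc (-T) T)), ‖u t‖ ≤ C

/-- `x` is a (Carathéodory) solution of `ẋ = f(x, u(t))` with `x s = x₀`, on `[s, b]`. -/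
def IsSolOn {n : ℕ} {U : Type*} (f : Euc n → U → Euc n) (u : ℝ → U) (s : ℝ)
    (x₀ : Euc n) (x : ℝ → Euc n) (b : ℝ) : Prop :=
  ∀ t ∈ Icc s b, x t = x₀ + ∫ τ in s..t, f (x τ) (u τ)

/-- `x` is a (Carathéodory) solution of `ẋ = f(x, u(t))` with `x s = x₀`, on `[s, ∞)`. -/
def IsSolGlobal {n : ℕ} {U : Type*} (f : Euc n → U → Euc n) (u : ℝ → U) (s : ℝ)
    (x₀ : Euc n) (x : ℝ → Euc n) : Prop :=
  ∀ t, s ≤ t → x t = x₀ + ∫ τ in s..t, f (x τ) (u τ)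

/-- Vector fields on `ℝⁿ`. -/
abbrev VF (n : ℕ) : Type := Euc n → Euc n

/-- `(XV)(x) := DV(x)·X(x)`, the derivative of `V` along the vector field `X`. -/
def vfD {n : ℕ} (X : VF n) (V : Euc n → ℝ) : Euc n → ℝ := fun x => fderiv ℝ V x (X x)

/-- Lie bracket `[X,Y] := (DY)X − (DX)Y`. -/
def lieB {n : ℕ} (X Y : VF n) : VF n := fun x => fderiv ℝ Y x (X x) - fderiv ℝ X x (Y x)

/-- `iterD X V i = XⁱV`, with `X⁰V = V` and `X^{i+1}V = X(XⁱV)`. -/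
def iterD {n : ℕ} (X : VF n) (V : Euc n → ℝ) : ℕ → (Euc n → ℝ)
  | 0 => V
  | i + 1 => vfD X (iterD X V i)

/-- `applyVFs [Δ₁, …, Δ_k] V = Δ₁Δ₂⋯Δ_kV`. -/
def applyVFs {n : ℕ} : List (VF n) → (Euc n → ℝ) → (Euc n → ℝ)
  | [], V => V
  | X :: L, V => vfD X (applyVFs L V)

/-- `adIter X Y N = [[…[[X,Y],Y],…,Y],Y]` (`N` iterated brackets with `Y`). -/
def adIter {n : ℕ} (X Y : VF n) : ℕ → VF n
  | 0 => X
  | k + 1 => lieB (adIter X Y k) Y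

/-- `Lk f g i` is the subspace `L_{i+1}` of the paper:
`L₁ = span{f,g}` and `L_{i+1} = span{[X,Y] : X ∈ L_i, Y ∈ L₁}`. -/
def Lk {n : ℕ} (f g : VF n) : ℕ → Submodule ℝ (VF n)
  | 0 => Submodule.span ℝ {f, g}
  | i + 1 => Submodule.span ℝ
      {Z : VF n | ∃ X ∈ Lk f g i, ∃ Y ∈ Submodule.span ℝ ({f, g} : Set (VF n)), Z = lieB X Y}

/-- The Lie algebra generated by `{f, g}` (the span of all the `L_i`). -/
def LieGen {n : ℕ} (f g : VF n) : Submodule ℝ (VF n) := ⨆ i : ℕ, Lk f g i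

/-- `hasOrder f g Δ k` : `Δ` has order `k` with respect to `{f,g}`:
order `1` iff `Δ ∈ L₁ \ {0}`; order `k > 1` iff `Δ = Δ₁ + Δ₂` with
`Δ₁ ∈ L_k \ {0}` and `Δ₂ ∈ span{∪_{i=1}^{k-1} L_i}`. -/
def hasOrder {n : ℕ} (f g : VF n) (Δ : VF n) : ℕ → Prop
  | 0 => False
  | 1 => Δ ∈ Lk f g 0 ∧ Δ ≠ 0
  | k + 2 => ∃ Δ₁ Δ₂ : VF n, Δ₁ ∈ Lk f g (k + 1) ∧ Δ₁ ≠ 0 ∧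
      Δ₂ ∈ (⨆ i ∈ Finset.range (k + 1), Lk f g i) ∧ Δ = Δ₁ + Δ₂

/-- `(Δ₁Δ₂⋯Δ_kV)(x) = 0` for all `Δ₁,…,Δ_k ∈ Lie{f,g} ∖ {g}` with
`Σ_p order_{{f,g}} Δ_p ≤ N`. -/
def LieCondZero {n : ℕ} (f g : VF n) (V : Euc n → ℝ) (x : Euc n) (N : ℕ) : Prop :=
  ∀ (Δs : List (VF n)) (os : List ℕ), Δs ≠ [] → Δs.length = os.length →
    (∀ p ∈ List.zip Δs os, p.1 ∈ LieGen f g ∧ p.1 ≠ g ∧ hasOrder f g p.1 p.2) →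
    os.sum ≤ N → applyVFs Δs V x = 0

/-!
For a vector field `X` with flow `Φ`, the triple `(Φ_s(a), h, h⁻¹ • (Φ_s(a + h • q) - Φ_s(a)))`
moves along an autonomous field of `(a, h, q)`, the secant field, whose last component is
`∫₀¹ DX(a + θhq) q dθ`. This field is locally Lipschitz across `h = 0`, where it becomes the
variational equation along `X`. Differentiability of `Φ` in the initial value, with derivative
solving the variational equation, is therefore just the continuity at `h = 0` of the flow of the
secant field.

For `w(t) = Φ_{ρt}(ψ(t))`, with `ψ` an integral curve of `Y` and `A = ρX + Y`, this gives
`w' = ρX(w) + q` with `q` a variational solution started from `Y(ψ(t))`. Hence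
`w''(0) = DA·A + ρ[Y, X]`, and the formula for `V ∘ w` is the second order chain rule.
-/

open scoped Topology NNReal

theorem exists_forall_lipschitzOnWith_of_isCompact {Θ Z F : Type*} [PseudoEMetricSpace Θ]
    [PseudoEMetricSpace Z] [PseudoEMetricSpace F] {k : Θ → Z → F} (hk : LocallyLipschitz ↿k)
    {S : Set Θ} (hS : IsCompact S) (z₀ : Z) :
    ∃ K : ℝ≥0, ∃ t ∈ 𝓝 z₀, ∀ θ ∈ S, LipschitzOnWith K (k θ) t := by
  refine hS.induction_on ⟨0, univ, univ_mem, by simp⟩ ?_ ?_ ?_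
  · rintro S T hST ⟨K, t, ht, hK⟩
    exact ⟨K, t, ht, fun θ hθ => hK θ (hST hθ)⟩
  · rintro S T ⟨K, t, ht, hK⟩ ⟨K', t', ht', hK'⟩
    refine ⟨max K K', t ∩ t', inter_mem ht ht', fun θ hθ => ?_⟩
    rcases hθ with hθ | hθ
    · exact ((hK θ hθ).mono inter_subset_left).weaken (le_max_left K K')
    · exact ((hK' θ hθ).mono inter_subset_right).weaken (le_max_right K K')
  · intro θ _
    obtain ⟨K, u, hu, hK⟩ := hk (θ, z₀)
    obtain ⟨S, hS, t, ht, hSt⟩ := mem_nhds_prod_iff.1 hu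
    refine ⟨S, mem_nhdsWithin_of_mem_nhds hS, K, t, ht, fun η hη => ?_⟩
    have hslice : LipschitzOnWith (K * 1) (↿k ∘ Prod.mk η) t :=
      hK.comp (LipschitzWith.prodMk_left η).lipschitzOnWith fun z hz => hSt (mk_mem_prod hη hz)
    rwa [mul_one] at hslice

theorem locallyLipschitz_intervalIntegral {Z F : Type*} [PseudoMetricSpace Z]
    [NormedAddCommGroup F] [NormedSpace ℝ F] {k : ℝ → Z → F} (hk : LocallyLipschitz ↿k) (a b : ℝ) :
    LocallyLipschitz fun z => ∫ θ in a..b, k θ z := by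
  intro z₀
  have hint (z : Z) : IntervalIntegrable (k · z) volume a b :=
    (hk.continuous.comp (Continuous.prodMk_left z)).intervalIntegrable a b
  obtain ⟨K, t, ht, hK⟩ :=
    exists_forall_lipschitzOnWith_of_isCompact hk (isCompact_uIcc (a := a) (b := b)) z₀
  refine ⟨K * Real.nnabs (b - a), t, ht, LipschitzOnWith.of_dist_le_mul fun x hx y hy => ?_⟩
  rw [dist_eq_norm, ← intervalIntegral.integral_sub (hint x) (hint y)]
  calc ‖∫ θ in a..b, k θ x - k θ y‖ ≤ K * dist x y * |b - a| :=
        intervalIntegral.norm_integral_le_of_norm_le_const fun θ hθ => by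
          rw [← dist_eq_norm]
          exact (hK θ (uIoc_subset_uIcc hθ)).dist_le_mul x hx y hy
    _ = ↑(K * Real.nnabs (b - a)) * dist x y := by
        simp only [NNReal.coe_mul, Real.coe_nnabs]; ring

theorem exists_isPicardLindelof_of_lipschitzOnWith {E : Type*} [NormedAddCommGroup E] {X : E → E}
    {x₀ : E} {K : ℝ≥0} {s : Set E} (hs : s ∈ 𝓝 x₀) (hX : LipschitzOnWith K X s) :
    ∃ (ε : ℝ) (hε : 0 < ε) (a r L : ℝ≥0), 0 < r ∧
      IsPicardLindelof (fun _ => X) (tmin := -ε) (tmax := ε)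
        ⟨0, (neg_lt_zero.2 hε).le, hε.le⟩ x₀ a r L K := by
  obtain ⟨a, ha, has⟩ := Metric.nhds_basis_closedBall.mem_iff.1 hs
  lift a to ℝ≥0 using ha.le
  obtain ⟨L, hL⟩ : ∃ L : ℝ≥0, ∀ x ∈ Metric.closedBall x₀ a, ‖X x‖ ≤ L := by
    refine ⟨K * a + ‖X x₀‖₊, fun x hx => ?_⟩
    calc ‖X x‖ ≤ ‖X x - X x₀‖ + ‖X x₀‖ := norm_le_norm_sub_add _ _
      _ ≤ K * ‖x - x₀‖ + ‖X x₀‖ := by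
        gcongr
        exact hX.norm_sub_le (has hx) (mem_of_mem_nhds hs)
      _ ≤ K * a + ‖X x₀‖ := by
        gcongr
        exact mem_closedBall_iff_norm.1 hx
  have ha' : (0 : ℝ) < a / 2 / (L + 1) := by positivity
  refine ⟨a / 2 / (L + 1), ha', a, a / 2, L, half_pos (mod_cast ha),
    .of_time_independent hL (hX.mono has) ?_⟩
  simp only [sub_zero, zero_sub, neg_neg, max_self, NNReal.coe_div, NNReal.coe_ofNat, sub_half]
  rw [← mul_div_assoc, div_le_iff₀ (by positivity), mul_comm]
  gcongr
  exact le_add_of_nonneg_right zero_le_one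

section

variable {E : Type*} [NormedAddCommGroup E] [NormedSpace ℝ E]

theorem isLittleO_sub_sub_smul_of_hasDerivAt {ι : Type*} {l : Filter ι} {f f' : ℝ → ι → E}
    {σ : ι → ℝ} {s₀ : ℝ} {c : E} (hσ : Tendsto σ l (𝓝 s₀))
    (hf : ∀ᶠ p in 𝓝 s₀ ×ˢ l, HasDerivAt (f · p.2) (f' p.1 p.2) p.1)
    (hf' : Tendsto ↿f' (𝓝 s₀ ×ˢ l) (𝓝 c)) :
    (fun i => f (σ i) i - f s₀ i - (σ i - s₀) • c) =o[l] fun i => σ i - s₀ := by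
  refine Asymptotics.isLittleO_iff.2 fun ε hε => ?_
  have hclose : ∀ᶠ p in l ×ˢ 𝓝 s₀,
      HasDerivAt (f · p.1) (f' p.2 p.1) p.2 ∧ ‖f' p.2 p.1 - c‖ ≤ ε :=
    eventually_swap_iff.1 <| hf.and <|
      (hf'.eventually (Metric.closedBall_mem_nhds c hε)).mono fun _ h => mem_closedBall_iff_norm.1 h
  filter_upwards [Eventually.segment_of_prod_nhds
    (r := fun i s => HasDerivAt (f · i) (f' s i) s ∧ ‖f' s i - c‖ ≤ ε)
    tendsto_const_nhds hσ hclose] with i hi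
  have hderiv (s) (hs : s ∈ segment ℝ s₀ (σ i)) :
      HasDerivWithinAt (fun s => f s i - (s - s₀) • c) (f' s i - c) (segment ℝ s₀ (σ i)) s := by
    simpa using! ((hi s hs).1.sub (((hasDerivAt_id s).sub_const s₀).smul_const c)).hasDerivWithinAt
  simpa [sub_right_comm] using
    (convex_segment s₀ (σ i)).norm_image_sub_le_of_norm_hasDerivWithin_le hderiv
      (fun s hs => (hi s hs).2) (left_mem_segment ℝ s₀ (σ i)) (right_mem_segment ℝ s₀ (σ i))

theorem hasDerivAt_diag_of_hasDerivAt {f f' : ℝ → ℝ → E} {σ : ℝ → ℝ} {σ' s₀ t₀ : ℝ} {b : E}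
    (hσ : HasDerivAt σ σ' t₀) (hσ₀ : σ t₀ = s₀)
    (hf : ∀ᶠ p in 𝓝 (s₀, t₀), HasDerivAt (f · p.2) (f' p.1 p.2) p.1)
    (hf' : ContinuousAt ↿f' (s₀, t₀)) (hb : HasDerivAt (f s₀) b t₀) :
    HasDerivAt (fun t => f (σ t) t) (σ' • f' s₀ t₀ + b) t₀ := by
  subst hσ₀
  have hrem : (fun t => f (σ t) t - f (σ t₀) t - (σ t - σ t₀) • f' (σ t₀) t₀) =o[𝓝 t₀]
      fun t => t - t₀ := by
    rw [ContinuousAt, nhds_prod_eq] at hf'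
    rw [nhds_prod_eq] at hf
    exact (isLittleO_sub_sub_smul_of_hasDerivAt hσ.continuousAt.tendsto hf hf').trans_isBigO
      hσ.isBigO_sub
  have h0 : HasDerivAt (fun t => f (σ t) t - f (σ t₀) t - (σ t - σ t₀) • f' (σ t₀) t₀) 0 t₀ := by
    simpa [hasDerivAt_iff_isLittleO] using hrem
  have hsum := (h0.add ((hσ.sub_const (σ t₀)).smul_const (f' (σ t₀) t₀))).add hb
  rw [zero_add] at hsum
  exact hsum.congr_of_eventuallyEq (.of_forall fun t => by simp)

theorem eqOn_Ioo_of_hasDerivAt_of_locallyLipschitz {X : E → E} (hX : LocallyLipschitz X)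
    {f g : ℝ → E} {a b t₀ : ℝ} (hf : ∀ t ∈ Ioo a b, HasDerivAt f (X (f t)) t)
    (hg : ∀ t ∈ Ioo a b, HasDerivAt g (X (g t)) t) (ht₀ : t₀ ∈ Ioo a b) (h : f t₀ = g t₀) :
    EqOn f g (Ioo a b) := by
  intro t ht
  obtain ⟨a', haa', ha't⟩ := exists_between (lt_min ht.1 ht₀.1)
  obtain ⟨b', htb', hb'b⟩ := exists_between (max_lt ht.2 ht₀.2)
  rw [lt_min_iff] at ha't
  rw [max_lt_iff] at htb'
  have hsub : Icc a' b' ⊆ Ioo a b := Icc_subset_Ioo haa' hb'b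
  have hfc : ContinuousOn f (Icc a' b') := HasDerivAt.continuousOn fun s hs => hf s (hsub hs)
  have hgc : ContinuousOn g (Icc a' b') := HasDerivAt.continuousOn fun s hs => hg s (hsub hs)
  obtain ⟨K, hK⟩ := LocallyLipschitzOn.exists_lipschitzOnWith_of_compact
    ((isCompact_Icc.image_of_continuousOn hfc).union (isCompact_Icc.image_of_continuousOn hgc))
    hX.locallyLipschitzOn
  refine ODE_solution_unique_of_mem_Ioo (v := fun _ => X) (fun _ _ => hK) ⟨ha't.2, htb'.2⟩
    (fun s hs => ?_) (fun s hs => ?_) h ⟨ha't.1, htb'.1⟩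
  · have hs' := Ioo_subset_Icc_self hs
    exact ⟨hf s (hsub hs'), Or.inl (mem_image_of_mem f hs')⟩
  · have hs' := Ioo_subset_Icc_self hs
    exact ⟨hg s (hsub hs'), Or.inr (mem_image_of_mem g hs')⟩

theorem eventually_eq_of_hasDerivAt_of_locallyLipschitz {X : E → E} (hX : LocallyLipschitz X)
    {ι : Type*} {l : Filter ι} {f g : ℝ → ι → E}
    (hf : ∀ᶠ p in 𝓝 0 ×ˢ l, HasDerivAt (f · p.2) (X (f p.1 p.2)) p.1)
    (hg : ∀ᶠ p in 𝓝 0 ×ˢ l, HasDerivAt (g · p.2) (X (g p.1 p.2)) p.1)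
    (h : ∀ᶠ i in l, f 0 i = g 0 i) :
    ∀ᶠ p in 𝓝 (0 : ℝ) ×ˢ l, f p.1 p.2 = g p.1 p.2 := by
  obtain ⟨P, hP, Q, hQ, hPQ⟩ := eventually_prod_iff.1 (hf.and hg)
  obtain ⟨ε, hε, hεP⟩ := Metric.eventually_nhds_iff_ball.1 hP
  rw [Real.ball_zero_eq_Ioo] at hεP
  refine eventually_prod_iff.2 ⟨_, Ioo_mem_nhds (neg_lt_zero.2 hε) hε, _, hQ.and h, ?_⟩
  exact fun {s} hs {i} hi => eqOn_Ioo_of_hasDerivAt_of_locallyLipschitz hX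
    (f := (f · i)) (g := (g · i))
    (fun t ht => (hPQ (hεP t ht) hi.1).1) (fun t ht => (hPQ (hεP t ht) hi.1).2)
    ⟨neg_lt_zero.2 hε, hε⟩ hi.2 hs

/-- `Φ` is a flow of the vector field `X` for small times and for initial points near `x₀`. -/
structure IsLocalFlowAt (X : E → E) (Φ : ℝ → E → E) (x₀ : E) : Prop where
  map_zero : ∀ᶠ z in 𝓝 x₀, Φ 0 z = z
  hasDerivAt : ∀ᶠ p in 𝓝 ((0 : ℝ), x₀), HasDerivAt (Φ · p.2) (X (Φ p.1 p.2)) p.1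

theorem IsLocalFlowAt.of_mem_nhds {X : E → E} {Φ : ℝ → E → E} {x₀ : E} {δ : ℝ} (hδ : 0 < δ)
    {U : Set E} (hU : U ∈ 𝓝 x₀) (hΦ₀ : ∀ z ∈ U, Φ 0 z = z)
    (hΦ : ∀ z ∈ U, ∀ t ∈ Ioo (-δ) δ, HasDerivAt (Φ · z) (X (Φ t z)) t) :
    IsLocalFlowAt X Φ x₀ where
  map_zero := mem_of_superset hU hΦ₀
  hasDerivAt := mem_of_superset (prod_mem_nhds (Ioo_mem_nhds (neg_lt_zero.2 hδ) hδ) hU)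
    fun p hp => hΦ p.2 hp.2 p.1 hp.1

theorem exists_isLocalFlowAt_eventually_continuousAt [CompleteSpace E] {X : E → E}
    (hX : LocallyLipschitz X) (x₀ : E) :
    ∃ Φ, IsLocalFlowAt X Φ x₀ ∧ ∀ᶠ p in 𝓝 ((0 : ℝ), x₀), ContinuousAt ↿Φ p := by
  obtain ⟨K, s, hs, hK⟩ := hX x₀
  obtain ⟨ε, hε, a, r, L, hr, hPL⟩ := exists_isPicardLindelof_of_lipschitzOnWith hs hK
  obtain ⟨α, hα, hαc⟩ := hPL.exists_forall_mem_closedBall_eq_hasDerivWithinAt_continuousOn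
  have hball : ∀ᶠ z in 𝓝 x₀, z ∈ Metric.closedBall x₀ r := Metric.closedBall_mem_nhds x₀ hr
  have hmem : ∀ᶠ p in 𝓝 ((0 : ℝ), x₀), p.1 ∈ Ioo (-ε) ε ∧ p.2 ∈ Metric.closedBall x₀ r :=
    prod_mem_nhds (Ioo_mem_nhds (neg_lt_zero.2 hε) hε) hball
  refine ⟨fun t z => α (z, t), ⟨?_, ?_⟩, ?_⟩
  · filter_upwards [hball] with z hz using (hα z hz).1
  · filter_upwards [hmem] with p hp
    exact ((hα p.2 hp.2).2 p.1 (Ioo_subset_Icc_self hp.1)).hasDerivAt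
      (Icc_mem_nhds hp.1.1 hp.1.2)
  · have hswap : Tendsto Prod.swap (𝓝 ((0 : ℝ), x₀)) (𝓝 (x₀, 0)) := continuous_swap.tendsto _
    have hαc' : ∀ᶠ q in 𝓝 (x₀, (0 : ℝ)), ContinuousAt α q :=
      (eventually_mem_nhds_iff.2 <| prod_mem_nhds hball <|
        Icc_mem_nhds (neg_lt_zero.2 hε) hε).mono fun q hq => hαc.continuousAt hq
    exact (hswap.eventually hαc').mono fun p hp =>
      ContinuousAt.comp (g := α) hp continuous_swap.continuousAt

namespace IsLocalFlowAt

variable {X : E → E} {Φ Ψ : ℝ → E → E} {x₀ : E}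

theorem eventually_eq (hΦ : IsLocalFlowAt X Φ x₀) (hΨ : IsLocalFlowAt X Ψ x₀)
    (hX : LocallyLipschitz X) : ∀ᶠ p in 𝓝 ((0 : ℝ), x₀), Φ p.1 p.2 = Ψ p.1 p.2 := by
  have hΦ' := hΦ.hasDerivAt
  have hΨ' := hΨ.hasDerivAt
  rw [nhds_prod_eq] at hΦ' hΨ' ⊢
  refine eventually_eq_of_hasDerivAt_of_locallyLipschitz hX hΦ' hΨ' ?_
  filter_upwards [hΦ.map_zero, hΨ.map_zero] with z h h' using h.trans h'.symm

theorem eventually_continuousAt [CompleteSpace E] (hΦ : IsLocalFlowAt X Φ x₀)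
    (hX : LocallyLipschitz X) : ∀ᶠ p in 𝓝 ((0 : ℝ), x₀), ContinuousAt ↿Φ p := by
  obtain ⟨Ψ, hΨ, hΨc⟩ := exists_isLocalFlowAt_eventually_continuousAt hX x₀
  filter_upwards [hΨc, (hΦ.eventually_eq hΨ hX).eventually_nhds] with p hp hΦΨ
  exact hp.congr_of_eventuallyEq hΦΨ

end IsLocalFlowAt

/-- The secant triple of a map `F`: base point, step and divided difference of `F` at `(a, h, q)`.
It is meaningful only for a step `h ≠ 0`. -/
def secantMap (F : E → E) (z : E × ℝ × E) : E × ℝ × E :=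
  (F z.1, z.2.1, z.2.1⁻¹ • (F (z.1 + z.2.1 • z.2.2) - F z.1))

/-- The vector field on triples `(a, h, q)` whose flow is the secant map of the flow of `X`
when `h ≠ 0`. For `h = 0` it is the tangent lift of `X`, so its flow solves the variational
equation. -/
def secantField (X : E → E) (z : E × ℝ × E) : E × ℝ × E :=
  (X z.1, 0, ∫ θ in (0 : ℝ)..1, fderiv ℝ X (z.1 + (θ * z.2.1) • z.2.2) z.2.2)

theorem secantField_zero [CompleteSpace E] (X : E → E) (a v : E) :
    secantField X (a, 0, v) = (X a, 0, fderiv ℝ X a v) := by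
  simp [secantField]

theorem smul_secantField_snd_snd [CompleteSpace E] {X : E → E} (hX : ContDiff ℝ 1 X)
    (z : E × ℝ × E) :
    z.2.1 • (secantField X z).2.2 = X (z.1 + z.2.1 • z.2.2) - X z.1 := by
  obtain ⟨a, h, q⟩ := z
  have hcurve (τ : ℝ) : HasDerivAt (fun τ : ℝ => a + τ • q) q τ := by
    simpa using! ((hasDerivAt_id τ).smul_const q).const_add a
  have hderiv (τ : ℝ) : HasDerivAt (fun τ : ℝ => X (a + τ • q)) (fderiv ℝ X (a + τ • q) q) τ :=
    ((hX.differentiable one_ne_zero).differentiableAt.hasFDerivAt).comp_hasDerivAt τ (hcurve τ)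
  have hcont : Continuous fun θ : ℝ => fderiv ℝ X (a + (0 + θ • h) • q) q :=
    ((hX.continuous_fderiv one_ne_zero).comp (by fun_prop)).clm_apply continuous_const
  simpa [secantField] using intervalIntegral.integral_unitInterval_deriv_eq_sub (z₀ := (0 : ℝ))
    (z₁ := h) (f := fun τ => X (a + τ • q)) (f' := fun τ => fderiv ℝ X (a + τ • q) q)
    hcont.continuousOn fun θ _ => hderiv _

theorem locallyLipschitz_secantField {X : E → E} (hX : ContDiff ℝ 2 X) :
    LocallyLipschitz (secantField X) := by
  have hker : ContDiff ℝ 1 fun p : ℝ × E × ℝ × E =>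
      fderiv ℝ X (p.2.1 + (p.1 * p.2.2.1) • p.2.2.2) p.2.2.2 :=
    ((hX.fderiv_right (by norm_num)).comp (by fun_prop)).clm_apply (by fun_prop)
  have hX₁ : ContDiff ℝ 1 fun z : E × ℝ × E => X z.1 := (hX.of_le one_le_two).comp contDiff_fst
  exact hX₁.locallyLipschitz.prodMk
    ((LocallyLipschitz.const 0).prodMk
      (locallyLipschitz_intervalIntegral hker.locallyLipschitz 0 1))

theorem hasDerivAt_secantMap [CompleteSpace E] {X : E → E} (hX : ContDiff ℝ 1 X)
    {Φ : ℝ → E → E} {z : E × ℝ × E} (hz : z.2.1 ≠ 0) {s : ℝ}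
    (h₁ : HasDerivAt (Φ · z.1) (X (Φ s z.1)) s)
    (h₂ : HasDerivAt (Φ · (z.1 + z.2.1 • z.2.2)) (X (Φ s (z.1 + z.2.1 • z.2.2))) s) :
    HasDerivAt (fun s => secantMap (Φ s) z) (secantField X (secantMap (Φ s) z)) s := by
  have hquot : z.2.1⁻¹ • (X (Φ s (z.1 + z.2.1 • z.2.2)) - X (Φ s z.1)) =
      (secantField X (secantMap (Φ s) z)).2.2 := by
    rw [inv_smul_eq_iff₀ hz]
    simpa [secantMap, hz] using (smul_secantField_snd_snd hX (secantMap (Φ s) z)).symm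
  exact h₁.prodMk ((hasDerivAt_const s z.2.1).prodMk
    (((h₂.sub h₁).const_smul z.2.1⁻¹).congr_deriv hquot))

namespace IsLocalFlowAt

variable [CompleteSpace E] {X : E → E} {Φ : ℝ → E → E} {α : ℝ → E × ℝ × E → E × ℝ × E} {x v : E}

theorem eventually_eq_secantMap (hX : ContDiff ℝ 2 X) (hΦ : IsLocalFlowAt X Φ x)
    (hα : IsLocalFlowAt (secantField X) α (x, 0, v)) :
    ∀ᶠ p in 𝓝 ((0 : ℝ), x, (0 : ℝ), v), p.2.2.1 ≠ 0 → α p.1 p.2 = secantMap (Φ p.1) p.2 := by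
  have hend : Tendsto (fun z : E × ℝ × E => z.1 + z.2.1 • z.2.2) (𝓝 (x, 0, v)) (𝓝 x) :=
    Continuous.tendsto' (by fun_prop) _ _ (by simp)
  have hpull {c : E × ℝ × E → E} (hc : Tendsto c (𝓝 (x, 0, v)) (𝓝 x)) :
      ∀ᶠ p in 𝓝 ((0 : ℝ), x, (0 : ℝ), v), HasDerivAt (Φ · (c p.2)) (X (Φ p.1 (c p.2))) p.1 :=
    (continuousAt_fst.tendsto.prodMk_nhds
      (hc.comp (continuous_snd.tendsto (0, x, 0, v)))).eventually hΦ.hasDerivAt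
  have hle : 𝓝 (0 : ℝ) ×ˢ 𝓝[{z | z.2.1 ≠ 0}] (x, (0 : ℝ), v) ≤ 𝓝 (0, x, 0, v) :=
    (Filter.prod_mono le_rfl nhdsWithin_le_nhds).trans_eq nhds_prod_eq.symm
  have hne : ∀ᶠ p in 𝓝 (0 : ℝ) ×ˢ 𝓝[{z | z.2.1 ≠ 0}] (x, (0 : ℝ), v), p.2.2.1 ≠ 0 :=
    tendsto_snd.eventually self_mem_nhdsWithin
  have heq := eventually_eq_of_hasDerivAt_of_locallyLipschitz (locallyLipschitz_secantField hX)
    (f := α) (g := fun s z => secantMap (Φ s) z) (hα.hasDerivAt.filter_mono hle) ?_ ?_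
  · rw [← nhdsWithin_univ, ← nhdsWithin_prod_eq, eventually_nhdsWithin_iff] at heq
    exact heq.mono fun p hp hne => hp ⟨trivial, hne⟩
  · filter_upwards [hne, hle (hpull continuousAt_fst), hle (hpull hend)] with p hp h₁ h₂
    exact hasDerivAt_secantMap (hX.of_le one_le_two) hp h₁ h₂
  · filter_upwards [nhdsWithin_le_nhds hα.map_zero, self_mem_nhdsWithin,
      nhdsWithin_le_nhds (hend.eventually hΦ.map_zero),
      nhdsWithin_le_nhds (continuousAt_fst.eventually hΦ.map_zero)] with z h hz h₁ h₂
    rw [h]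
    simp [secantMap, h₁, h₂, inv_smul_smul₀ hz]

theorem eventually_hasDerivAt_comp (hX : ContDiff ℝ 2 X) (hΦ : IsLocalFlowAt X Φ x)
    (hα : IsLocalFlowAt (secantField X) α (x, 0, v)) :
    ∀ᶠ p in 𝓝 ((0 : ℝ), x, v), ∀ (ψ : ℝ → E) (t : ℝ), ψ t = p.2.1 → HasDerivAt ψ p.2.2 t →
      HasDerivAt (fun τ => Φ p.1 (ψ τ)) (α p.1 (p.2.1, 0, p.2.2)).2.2 t := by
  have hembed : Tendsto (fun p : ℝ × E × E => (p.1, p.2.1, (0 : ℝ), p.2.2)) (𝓝 (0, x, v))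
      (𝓝 (0, x, 0, v)) := Continuous.tendsto' (by fun_prop) _ _ rfl
  filter_upwards [hembed.eventually (hΦ.eventually_eq_secantMap hX hα).eventually_nhds,
    hembed.eventually (hα.eventually_continuousAt (locallyLipschitz_secantField hX))]
  rintro ⟨s, a, w⟩ heq hcont ψ t rfl hψ
  rw [hasDerivAt_iff_tendsto_slope_zero] at hψ ⊢
  have hsecant : Tendsto (fun h : ℝ => (s, ψ t, h, h⁻¹ • (ψ (t + h) - ψ t))) (𝓝[≠] 0)
      (𝓝 (s, ψ t, 0, w)) :=
    tendsto_const_nhds.prodMk_nhds (tendsto_const_nhds.prodMk_nhds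
      ((tendsto_id.mono_left nhdsWithin_le_nhds).prodMk_nhds hψ))
  refine ((continuous_snd.snd.tendsto _).comp (hcont.tendsto.comp hsecant)).congr' ?_
  filter_upwards [hsecant.eventually heq, self_mem_nhdsWithin] with h hh hne
  simpa [secantMap, smul_inv_smul₀ hne] using! congrArg (fun z => z.2.2) (hh hne)

end IsLocalFlowAt

theorem hasDerivAt_mul_comp_of_hasDerivAt {X : E → E} (hX : Continuous X) {Φ : ℝ → E → E}
    {ψ : ℝ → E} {ρ t : ℝ} {b : E}
    (hΦ : ∀ᶠ p in 𝓝 (ρ * t, ψ t), HasDerivAt (Φ · p.2) (X (Φ p.1 p.2)) p.1)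
    (hΦc : ContinuousAt ↿Φ (ρ * t, ψ t)) (hψ : ContinuousAt ψ t)
    (hb : HasDerivAt (fun τ => Φ (ρ * t) (ψ τ)) b t) :
    HasDerivAt (fun τ => Φ (ρ * τ) (ψ τ)) (ρ • X (Φ (ρ * t) (ψ t)) + b) t := by
  have hpair : ContinuousAt (fun p : ℝ × ℝ => (p.1, ψ p.2)) (ρ * t, t) :=
    continuousAt_fst.prodMk (ContinuousAt.comp (f := Prod.snd) hψ continuousAt_snd)
  exact hasDerivAt_diag_of_hasDerivAt (f := fun s τ => Φ s (ψ τ)) (f' := fun s τ => X (Φ s (ψ τ)))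
    (hasDerivAt_const_mul ρ) rfl (hpair.eventually hΦ)
    (hX.continuousAt.comp
      (ContinuousAt.comp (g := ↿Φ) (f := fun p : ℝ × ℝ => (p.1, ψ p.2)) hΦc hpair)) hb

namespace IsLocalFlowAt

variable [CompleteSpace E] {X : E → E} {Φ : ℝ → E → E} {x₀ : E}

theorem hasDerivAt_mul_comp (hX : LocallyLipschitz X) (hΦ : IsLocalFlowAt X Φ x₀) {ψ : ℝ → E}
    {ψ' : E} (hψ : HasDerivAt ψ ψ' 0) (hψ₀ : ψ 0 = x₀) (ρ : ℝ) :
    HasDerivAt (fun t => Φ (ρ * t) (ψ t)) (ρ • X x₀ + ψ') 0 := by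
  have hbase : (ρ * 0, ψ 0) = (0, x₀) := by rw [mul_zero, hψ₀]
  have hinit : (fun t => Φ (ρ * 0) (ψ t)) =ᶠ[𝓝 0] ψ := by
    rw [mul_zero]
    exact hψ.continuousAt.eventually (hψ₀.symm ▸ hΦ.map_zero)
  simpa [hψ₀, hΦ.map_zero.self_of_nhds] using hasDerivAt_mul_comp_of_hasDerivAt hX.continuous
    (hbase ▸ hΦ.hasDerivAt) (hbase ▸ (hΦ.eventually_continuousAt hX).self_of_nhds) hψ.continuousAt
    (hψ.congr_of_eventuallyEq hinit)

variable {α : ℝ → E × ℝ × E → E × ℝ × E} {ψ ψ' : ℝ → E}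

theorem eventually_hasDerivAt_mul_comp (hX : ContDiff ℝ 2 X) (hΦ : IsLocalFlowAt X Φ x₀)
    {v : E} (hα : IsLocalFlowAt (secantField X) α (x₀, 0, v))
    (hψ : ∀ᶠ t in 𝓝 0, HasDerivAt ψ (ψ' t) t) (hψ' : ContinuousAt ψ' 0) (hψ₀ : ψ 0 = x₀)
    (hψ'₀ : ψ' 0 = v) (ρ : ℝ) :
    ∀ᶠ t in 𝓝 0, HasDerivAt (fun τ => Φ (ρ * τ) (ψ τ))
      (ρ • X (Φ (ρ * t) (ψ t)) + (α (ρ * t) (ψ t, 0, ψ' t)).2.2) t := by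
  have hψc : ContinuousAt ψ 0 := hψ.self_of_nhds.continuousAt
  have hmul : Tendsto (fun t => ρ * t) (𝓝 0) (𝓝 0) :=
    Continuous.tendsto' (by fun_prop) _ _ (by simp)
  have hcurve : Tendsto (fun t => (ρ * t, ψ t)) (𝓝 0) (𝓝 (0, x₀)) :=
    hmul.prodMk_nhds (hψ₀ ▸ hψc.tendsto)
  have hlift : Tendsto (fun t => (ρ * t, ψ t, ψ' t)) (𝓝 0) (𝓝 (0, x₀, v)) :=
    hmul.prodMk_nhds ((hψ₀ ▸ hψc.tendsto).prodMk_nhds (hψ'₀ ▸ hψ'.tendsto))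
  filter_upwards [hψ, hcurve.eventually hΦ.hasDerivAt.eventually_nhds,
    hcurve.eventually (hΦ.eventually_continuousAt (hX.of_le one_le_two).locallyLipschitz),
    hlift.eventually (hΦ.eventually_hasDerivAt_comp hX hα)] with t hψt hΦt hΦc hcomp
  exact hasDerivAt_mul_comp_of_hasDerivAt hX.continuous hΦt hΦc hψt.continuousAt
    (hcomp ψ t rfl hψt)

theorem exists_hasDerivAt_hasDerivAt (hX : ContDiff ℝ 2 X) (hΦ : IsLocalFlowAt X Φ x₀)
    {v c : E} (hψ : ∀ᶠ t in 𝓝 0, HasDerivAt ψ (ψ' t) t) (hψ' : HasDerivAt ψ' c 0) (hψ₀ : ψ 0 = x₀)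
    (hψ'₀ : ψ' 0 = v) (ρ : ℝ) :
    ∃ w' : ℝ → E, (∀ᶠ t in 𝓝 0, HasDerivAt (fun τ => Φ (ρ * τ) (ψ τ)) (w' t) t) ∧
      w' 0 = ρ • X x₀ + v ∧
      HasDerivAt w' (ρ • fderiv ℝ X x₀ (ρ • X x₀ + v) + (ρ • fderiv ℝ X x₀ v + c)) 0 := by
  obtain ⟨α, hα, -⟩ := exists_isLocalFlowAt_eventually_continuousAt
    (locallyLipschitz_secantField hX) (x₀, 0, v)
  have hw := hΦ.eventually_hasDerivAt_mul_comp hX hα hψ hψ'.continuousAt hψ₀ hψ'₀ ρ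
  have hw₀ : Φ (ρ * 0) (ψ 0) = x₀ := by rw [mul_zero, hψ₀, hΦ.map_zero.self_of_nhds]
  have hα₀ : (α (ρ * 0) (ψ 0, 0, ψ' 0)).2.2 = v := by
    rw [mul_zero, hψ₀, hψ'₀, hα.map_zero.self_of_nhds]
  have hwd := hw.self_of_nhds
  rw [hw₀, hα₀] at hwd
  have hX' : HasFDerivAt X (fderiv ℝ X x₀) (Φ (ρ * 0) (ψ 0)) :=
    hw₀ ▸ (hX.differentiable two_ne_zero x₀).hasFDerivAt
  have hζ : HasDerivAt (fun t => (ψ t, (0 : ℝ), ψ' t)) (v, 0, c) 0 :=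
    (hψ'₀ ▸ hψ.self_of_nhds).prodMk ((hasDerivAt_const 0 0).prodMk hψ')
  have hq := hα.hasDerivAt_mul_comp (locallyLipschitz_secantField hX) hζ (by rw [hψ₀, hψ'₀]) ρ
  refine ⟨_, hw, by rw [hw₀, hα₀], ((hX'.comp_hasDerivAt 0 hwd).const_smul ρ).add ?_⟩
  simpa [secantField_zero] using! hq.hasFDerivAt.snd.snd.hasDerivAt

end IsLocalFlowAt

variable {F : Type*} [NormedAddCommGroup F] [NormedSpace ℝ F]

theorem eventually_hasDerivAt_comp_of_contDiffAt {V : E → F} {w w' : ℝ → E} {t₀ : ℝ}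
    (hV : ContDiffAt ℝ 1 V (w t₀)) (hw : ∀ᶠ t in 𝓝 t₀, HasDerivAt w (w' t) t) :
    ∀ᶠ t in 𝓝 t₀, HasDerivAt (fun t => V (w t)) (fderiv ℝ V (w t) (w' t)) t := by
  have hVw := hw.self_of_nhds.continuousAt.eventually (hV.eventually (by simp))
  filter_upwards [hw, hVw] with t hwt hVt
  exact (hVt.differentiableAt one_ne_zero).hasFDerivAt.comp_hasDerivAt t hwt

theorem stmt10_general [CompleteSpace E] {X Y : E → E} {V : E → F} {x₀ : E} (hX : ContDiff ℝ 2 X)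
    (hY : DifferentiableAt ℝ Y x₀) (hV : ContDiffAt ℝ 2 V x₀) {Φ : ℝ → E → E}
    (hΦ : IsLocalFlowAt X Φ x₀) {ψ : ℝ → E} (hψ₀ : ψ 0 = x₀)
    (hψ : ∀ᶠ t in 𝓝 0, HasDerivAt ψ (Y (ψ t)) t) (ρ : ℝ) :
    ∃ ε : ℝ, 0 < ε ∧ ∃ m' : ℝ → F,
      (∀ t ∈ Ioo (-ε) ε, HasDerivAt (fun s => V (Φ (ρ * s) (ψ s))) (m' t) t) ∧
      HasDerivAt m'
        (fderiv ℝ (fun x => fderiv ℝ V x (ρ • X x + Y x)) x₀ (ρ • X x₀ + Y x₀) +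
          ρ • fderiv ℝ V x₀ (VectorField.lieBracket ℝ Y X x₀)) 0 := by
  have hYψ : HasDerivAt (fun t => Y (ψ t)) (fderiv ℝ Y x₀ (Y x₀)) 0 := by
    have hψ' := hψ.self_of_nhds
    rw [hψ₀] at hψ'
    exact HasFDerivAt.comp_hasDerivAt 0 (hψ₀.symm ▸ hY.hasFDerivAt) hψ'
  obtain ⟨w', hw, hw'₀, hw'⟩ := hΦ.exists_hasDerivAt_hasDerivAt hX hψ hYψ hψ₀ (by rw [hψ₀]) ρ
  have hw₀ : Φ (ρ * 0) (ψ 0) = x₀ := by rw [mul_zero, hψ₀, hΦ.map_zero.self_of_nhds]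
  have hDV : HasFDerivAt (fderiv ℝ V) (fderiv ℝ (fderiv ℝ V) x₀) x₀ :=
    ((hV.fderiv_right (m := 1) le_rfl).differentiableAt one_ne_zero).hasFDerivAt
  have hA : HasFDerivAt (fun x => ρ • X x + Y x) (ρ • fderiv ℝ X x₀ + fderiv ℝ Y x₀) x₀ :=
    ((hX.differentiable two_ne_zero x₀).hasFDerivAt.const_smul ρ).add hY.hasFDerivAt
  have hDVw : HasDerivAt (fun t => fderiv ℝ V (Φ (ρ * t) (ψ t)))
      (fderiv ℝ (fderiv ℝ V) x₀ (ρ • X x₀ + Y x₀)) 0 :=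
    HasFDerivAt.comp_hasDerivAt 0 (hw₀.symm ▸ hDV) (hw'₀ ▸ hw.self_of_nhds)
  obtain ⟨ε, hε, hm⟩ := Metric.eventually_nhds_iff_ball.1 <|
    eventually_hasDerivAt_comp_of_contDiffAt ((hw₀.symm ▸ hV).of_le one_le_two) hw
  refine ⟨ε, hε, _, fun t ht => hm t (Real.ball_zero_eq_Ioo ε ▸ ht),
    (hDVw.clm_apply hw').congr_deriv ?_⟩
  rw [(hDV.clm_apply hA).fderiv, hw₀, hw'₀]
  simp only [map_add, map_sub, map_smul, add_apply, smul_apply, smul_add, smul_sub,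
    ContinuousLinearMap.comp_add, ContinuousLinearMap.comp_smulₛₗ, Real.ringHom_apply,
    ContinuousLinearMap.comp_apply, ContinuousLinearMap.flip_apply, VectorField.lieBracket]
  abel

end

/-- With `X = f + u₁g`, `Y = f + u₂g`, `A₀ = ρX + Y`, `A₁ = [Y,X]`
and `m(t) = V(X_{ρt}(Y_t(x₀)))`, `m` is twice differentiable at `0` and
`m″(0) = (A₀²V)(x₀) + ρ(A₁V)(x₀)`. -/
theorem stmt10 {n : ℕ} (f g : VF n) (V : Euc n → ℝ)
    (hf : ContDiff ℝ (⊤ : ℕ∞) f) (hg : ContDiff ℝ (⊤ : ℕ∞) g) (hV : ContDiff ℝ (⊤ : ℕ∞) V)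
    (u₁ u₂ ρ : ℝ) (hρ : 0 < ρ) (x₀ : Euc n)
    (Φ : ℝ → Euc n → Euc n) (ψ : ℝ → Euc n) (δ : ℝ) (hδ : 0 < δ)
    (U : Set (Euc n)) (hU : U ∈ nhds x₀)
    (hΦ0 : ∀ z ∈ U, Φ 0 z = z)
    (hΦ : ∀ z ∈ U, ∀ t ∈ Ioo (-δ) δ,
      HasDerivAt (fun s => Φ s z) (f (Φ t z) + u₁ • g (Φ t z)) t)
    (hψ0 : ψ 0 = x₀)
    (hψ : ∀ t ∈ Ioo (-δ) δ, HasDerivAt ψ (f (ψ t) + u₂ • g (ψ t)) t)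
    (hψU : ∀ t ∈ Ioo (-δ) δ, ψ t ∈ U) :
    ∃ ε : ℝ, 0 < ε ∧ ∃ m1 : ℝ → ℝ,
      (∀ t ∈ Ioo (-ε) ε, HasDerivAt (fun s => V (Φ (ρ * s) (ψ s))) (m1 t) t) ∧
      HasDerivAt m1
        (vfD (fun x => ρ • (f x + u₁ • g x) + (f x + u₂ • g x))
            (vfD (fun x => ρ • (f x + u₁ • g x) + (f x + u₂ • g x)) V) x₀
          + ρ * vfD (lieB (fun x => f x + u₂ • g x) (fun x => f x + u₁ • g x)) V x₀)
        0 :=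
  stmt10_general (hf.add (hg.const_smul u₁) |>.of_le (WithTop.coe_le_coe.2 le_top))
    ((hf.add (hg.const_smul u₂)).differentiable (by simp) x₀)
    (hV.contDiffAt.of_le (WithTop.coe_le_coe.2 le_top)) (.of_mem_nhds hδ hU hΦ0 hΦ) hψ0
    (mem_of_superset (Ioo_mem_nhds (neg_lt_zero.2 hδ) hδ) hψ) ρ
end
end

section
/- Let f,g:ℝⁿ→ℝⁿ be smooth vector fields with f(0)=0, V:ℝⁿ→ℝ⁺ smooth, x₀≠0, and suppose there exists an integer N≥1 such that (gV)(x₀)=0, (fⁱV)(x₀)=0 for i=1,…,N, (Δ₁Δ₂⋯Δ_kV)(x₀)=0 for all Δ₁,…,Δ_k ∈ Lie{f,g}∖{g} with Σ_{p=1}^{k} order_{{f,g}}Δ_p ≤ N, and one of the following holds: (P1) (f^{N+1}V)(x₀)<0; (P2) N is odd and ([[…[[f,g],g],…,g],g]V)(x₀)≠0 (N iterated brackets with g); (P3) N is even and ([[…[[f,g],g],…,g],g]V)(x₀)<0 (N iterated brackets with g); (P4) (f^{N+1}V)(x₀)=0 and ([[…[[g,f],f],…,f],f]V)(x₀)≠0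 (N iterated brackets with f). Then there exist constants ρ=ρ(x₀)>0, u₁=u₁(x₀)∈ℝ and σ=σ(x₀)>0 such that, setting X:=f+u₁g and Y:=f−ρu₁g, the composition of flows satisfies V(X_{ρt}(Y_t(x₀))) < V(x₀) for every t∈(0,σ]. -/
open MeasureTheory Filter Set

noncomputable section

/-!
Vector fields act as operators on smooth functions, and `W ↦ W ∘ (flow of Y)` expands like
`exp (t Y)`. Hence `V (X_{ρt} (Y_t x₀))` has the Taylor expansion `∑ tᵐ / m! · (Z_m V) (x₀)`, where
`Z_m / m!` is the coefficient of `tᵐ` in `exp (t Y) * exp (t ρ X)`. The Lie condition kills every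
word of length `1, …, N` in `f` and `g`, so the sign of the increment is that of
`(Z_{N+1} V) (x₀)`.

Put `v = ρ u₁`, so that `Y = f - v g` and `ρ X = ρ f + v g`. The operator `T ↦ Y T + T (ρ X)`,
whose `m`-th power sends `1` to `Z_m`, equals `-⁅·, f⁆ + (1 + ρ) (· f) + v ⁅·, g⁆`; it is affine in
`v`, and its `v`-part kills `1`. So `(Z_{N+1} V) (x₀)` is a polynomial in `v` of degree at most
`N`, with constant coefficient `(1 + ρ)ᴺ⁺¹ (fᴺ⁺¹ V) (x₀)` and with
`(1 + ρ) ([[…[f, g], …], g] V) (x₀)` as coefficient of `vᴺ`.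
Its linear coefficient is a polynomial in `1 + ρ` which is nonzero if
`([[…[g, f], …], f] V) (x₀) ≠ 0`. Each of (P1)–(P4) therefore makes it negative for some `ρ > 0`
and `v`.
-/

section Algebra

open Polynomial

section Polynomial

lemma exists_eval_neg_of_coeff_neg {q : ℝ[X]} {N : ℕ} (hN : 0 < N) (hdeg : q.natDegree ≤ N)
    (hq : q.coeff N < 0) : ∃ u, q.eval u < 0 := by
  have hdeg' : q.natDegree = N := natDegree_eq_of_le_of_coeff_ne_zero hdeg hq.ne
  have hlim : Tendsto (fun u => q.eval u) atTop atBot :=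
    q.tendsto_atBot_of_leadingCoeff_nonpos (natDegree_pos_iff_degree_pos.1 (hdeg' ▸ hN))
      (by rw [leadingCoeff, hdeg']; exact hq.le)
  exact (hlim.eventually_lt_atBot 0).exists

lemma exists_eval_neg_of_odd_of_coeff_ne_zero {q : ℝ[X]} {N : ℕ} (hN : Odd N)
    (hdeg : q.natDegree ≤ N) (hq : q.coeff N ≠ 0) : ∃ u, q.eval u < 0 := by
  rcases hq.lt_or_gt with hneg | hpos
  · exact exists_eval_neg_of_coeff_neg hN.pos hdeg hneg
  · have hcomp : q.comp (-X) = q.comp (C (-1) * X) := by simp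
    obtain ⟨u, hu⟩ := exists_eval_neg_of_coeff_neg (q := q.comp (-X)) hN.pos
      (by simpa [natDegree_comp] using hdeg)
      (by simpa [hcomp, comp_C_mul_X_coeff, hN.neg_one_pow] using hpos)
    exact ⟨-u, by simpa using hu⟩

lemma exists_eval_neg_of_coeff_one_ne_zero {q : ℝ[X]} (hq₀ : q.coeff 0 = 0)
    (hq₁ : q.coeff 1 ≠ 0) : ∃ u, q.eval u < 0 := by
  by_contra! hnonneg
  have hmin : IsLocalMin (fun u => q.eval u) 0 := .of_forall fun u => by
    simpa only [← coeff_zero_eq_eval_zero, hq₀] using hnonneg u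
  have hderiv : q.derivative.eval 0 = 0 := q.deriv (x := 0) ▸ hmin.deriv_eq_zero
  exact hq₁ (by simpa [← coeff_zero_eq_eval_zero, coeff_derivative] using hderiv)

lemma exists_gt_eval_ne_zero {q : ℝ[X]} (hq : q ≠ 0) (a : ℝ) : ∃ r > a, q.eval r ≠ 0 := by
  by_contra! hroot
  exact hq (eq_zero_of_infinite_isRoot q ((Ioi_infinite a).mono hroot))

end Polynomial

section Pencil

variable {R M : Type*} [CommSemiring R] [AddCommMonoid M] [Module R M]

/-- The polynomial `u ↦ l ((P + u Q)ᵐ v)` attached to the pencil `P + u Q` of endomorphisms, a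
functional `l` and a vector `v`. The recursion expands the rightmost factor of the power. -/
def pencilPoly (P Q : Module.End R M) (l : M →ₗ[R] R) : ℕ → M → R[X]
  | 0, v => C (l v)
  | m + 1, v => pencilPoly P Q l m (P v) + X * pencilPoly P Q l m (Q v)

variable (P Q : Module.End R M) (l : M →ₗ[R] R) (m : ℕ) (v : M)

lemma pencilPoly_zero : pencilPoly P Q l m 0 = 0 := by
  induction m with
  | zero => simp [pencilPoly]
  | succ m ih => simp [pencilPoly, ih]

lemma eval_pencilPoly (u : R) :
    (pencilPoly P Q l m v).eval u = l (((P + u • Q) ^ m) v) := by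
  induction m generalizing v with
  | zero => simp [pencilPoly]
  | succ m ih => simp [pencilPoly, ih, pow_succ]

lemma natDegree_pencilPoly_le : (pencilPoly P Q l m v).natDegree ≤ m := by
  induction m generalizing v with
  | zero => simp [pencilPoly]
  | succ m ih =>
    rw [pencilPoly]
    refine natDegree_add_le_of_degree_le ((ih _).trans m.le_succ) ?_
    refine natDegree_mul_le_of_le natDegree_X_le (ih _) |>.trans ?_
    omega

lemma coeff_pencilPoly_self : (pencilPoly P Q l m v).coeff m = l ((Q ^ m) v) := by
  induction m generalizing v with
  | zero => simp [pencilPoly]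
  | succ m ih =>
    have hlow : (pencilPoly P Q l m (P v)).coeff (m + 1) = 0 :=
      coeff_eq_zero_of_natDegree_lt (Nat.lt_succ_of_le (natDegree_pencilPoly_le P Q l m _))
    simp [pencilPoly, hlow, ih, pow_succ]

lemma coeff_zero_pencilPoly : (pencilPoly P Q l m v).coeff 0 = l ((P ^ m) v) := by
  induction m generalizing v with
  | zero => simp [pencilPoly]
  | succ m ih => simp [pencilPoly, ih, pow_succ]

lemma coeff_one_pencilPoly :
    (pencilPoly P Q l (m + 1) v).coeff 1 =
      ∑ b ∈ Finset.range (m + 1), l ((P ^ (m - b)) (Q ((P ^ b) v))) := by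
  induction m generalizing v with
  | zero => simp [pencilPoly]
  | succ m ih =>
    rw [pencilPoly, coeff_add, ih, coeff_X_mul, coeff_zero_pencilPoly,
      Finset.sum_range_succ' _ (m + 1)]
    simp [pow_succ]

end Pencil

section ExpMul

variable {R A : Type*} [CommRing R] [Ring A] [Algebra R A]

/-- `m!` times the coefficient of `tᵐ` in the formal product `exp (t B) * exp (t C)`. -/
def expMulCoeff (B C : A) (m : ℕ) : A :=
  ∑ k ∈ Finset.range (m + 1), m.choose k • (B ^ (m - k) * C ^ k)

lemma expMulCoeff_zero (B C : A) : expMulCoeff B C 0 = 1 := by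
  simp [expMulCoeff]

lemma expMulCoeff_eq_pow_apply_one (B C : A) (m : ℕ) :
    expMulCoeff B C m = ((LinearMap.mulLeft R B + LinearMap.mulRight R C) ^ m) 1 := by
  rw [add_comm, (LinearMap.commute_mulLeft_right B C).symm.add_pow, LinearMap.sum_apply]
  refine Finset.sum_congr rfl fun k _ => ?_
  rw [← Nat.cast_comm, ← nsmul_eq_mul, LinearMap.smul_apply, Module.End.mul_apply,
    LinearMap.pow_mulLeft, LinearMap.pow_mulRight]
  simp

lemma expMulCoeff_mem_pow {S : Submodule R A} {B C : A} (hB : B ∈ S) (hC : C ∈ S) (m : ℕ) :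
    expMulCoeff B C m ∈ S ^ m := by
  refine sum_mem fun k hk => nsmul_mem ?_ _
  have hkm : m - k + k = m := Nat.sub_add_cancel (Finset.mem_range_succ_iff.1 hk)
  simpa only [← pow_add, hkm] using
    Submodule.mul_mem_mul (Submodule.pow_mem_pow S hB (m - k)) (Submodule.pow_mem_pow S hC k)

lemma expMulCoeff_mem_span_pow (F G : A) (ρ u : R) (m : ℕ) :
    expMulCoeff (F - (ρ * u) • G) (ρ • (F + u • G)) m ∈ Submodule.span R {F, G} ^ m := by
  have hF : F ∈ Submodule.span R {F, G} := Submodule.subset_span (.inl rfl)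
  have hG : G ∈ Submodule.span R {F, G} := Submodule.subset_span (.inr rfl)
  exact expMulCoeff_mem_pow (sub_mem hF (Submodule.smul_mem _ _ hG))
    (Submodule.smul_mem _ _ (add_mem hF (Submodule.smul_mem _ _ hG))) m

variable (R) in
/-- The linear map `T ↦ ⁅T, G⁆` for the commutator bracket of an associative algebra. The bracket
is taken on the right to match the iterated brackets `[[…[F, G], …], G]`. -/
def rightCommutator (G : A) : Module.End R A :=
  LinearMap.mulRight R G - LinearMap.mulLeft R G

lemma rightCommutator_apply (G T : A) : rightCommutator R G T = T * G - G * T := rfl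

lemma rightCommutator_pow (F : A) (m : ℕ) : rightCommutator R F (F ^ m) = 0 := by
  rw [rightCommutator_apply, ← pow_succ, ← pow_succ', sub_self]

lemma rightCommutator_one (G : A) : rightCommutator R G 1 = 0 := by
  rw [rightCommutator_apply, one_mul, mul_one, sub_self]

lemma mulLeft_add_mulRight_eq_pencil (F G : A) (ρ u : R) :
    LinearMap.mulLeft R (F - (ρ * u) • G) + LinearMap.mulRight R (ρ • (F + u • G)) =
      -rightCommutator R F + (1 + ρ) • LinearMap.mulRight R F + (ρ * u) • rightCommutator R G := by
  ext T
  simp only [rightCommutator_apply, LinearMap.add_apply, LinearMap.mulLeft_apply,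
    LinearMap.mulRight_apply, LinearMap.smul_apply, LinearMap.neg_apply, sub_mul, smul_mul_assoc,
    mul_smul_comm, mul_add, smul_add, smul_sub, smul_smul, add_smul, one_smul]
  abel

lemma neg_rightCommutator_add_smul_mulRight_pow_apply_one (F : A) (r : R) (m : ℕ) :
    ((-rightCommutator R F + r • LinearMap.mulRight R F) ^ m) 1 = r ^ m • F ^ m := by
  induction m with
  | zero => simp
  | succ m ih =>
    rw [pow_succ', Module.End.mul_apply, ih, map_smul, LinearMap.add_apply, LinearMap.neg_apply,
      rightCommutator_pow, neg_zero, zero_add, LinearMap.smul_apply, LinearMap.mulRight_apply,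
      smul_smul, ← pow_succ, ← pow_succ]

/-- The polynomial `v ↦ l (expMulCoeff (F - v G) (ρ F + v G) m)`, where `r = 1 + ρ`. -/
def flowPoly (F G : A) (l : A →ₗ[R] R) (r : R) (m : ℕ) : R[X] :=
  pencilPoly (-rightCommutator R F + r • LinearMap.mulRight R F) (rightCommutator R G) l m 1

variable (F G : A) (l : A →ₗ[R] R)

lemma eval_flowPoly (ρ u : R) (m : ℕ) :
    (flowPoly F G l (1 + ρ) m).eval (ρ * u) =
      l (expMulCoeff (F - (ρ * u) • G) (ρ • (F + u • G)) m) := by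
  rw [flowPoly, eval_pencilPoly, expMulCoeff_eq_pow_apply_one (R := R),
    mulLeft_add_mulRight_eq_pencil]

lemma coeff_zero_flowPoly (r : R) (m : ℕ) :
    (flowPoly F G l r m).coeff 0 = r ^ m * l (F ^ m) := by
  rw [flowPoly, coeff_zero_pencilPoly, neg_rightCommutator_add_smul_mulRight_pow_apply_one,
    map_smul, smul_eq_mul]

/-- The `v`-part of the pencil kills `1`, so the factor applied first contributes `r F`. -/
lemma flowPoly_succ (r : R) (m : ℕ) :
    flowPoly F G l r (m + 1) =
      pencilPoly (-rightCommutator R F + r • LinearMap.mulRight R F) (rightCommutator R G) l m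
        (r • F) := by
  have hP : (-rightCommutator R F + r • LinearMap.mulRight R F) 1 = r • F := by
    simpa only [pow_one] using neg_rightCommutator_add_smul_mulRight_pow_apply_one F r 1
  rw [flowPoly, pencilPoly, hP, rightCommutator_one, pencilPoly_zero, mul_zero, add_zero]

lemma natDegree_flowPoly_succ_le (r : R) (m : ℕ) :
    (flowPoly F G l r (m + 1)).natDegree ≤ m :=
  flowPoly_succ F G l r m ▸ natDegree_pencilPoly_le ..

lemma coeff_flowPoly_succ_self (r : R) (m : ℕ) :
    (flowPoly F G l r (m + 1)).coeff m = r * l ((rightCommutator R G ^ m) F) := by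
  rw [flowPoly_succ, coeff_pencilPoly_self, map_smul, map_smul, smul_eq_mul]

/-- The polynomial in `r` whose value is the coefficient of `v` in `flowPoly F G l r (m + 1)`. -/
def flowLinPoly (m : ℕ) : R[X] :=
  ∑ b ∈ Finset.range (m + 1), X ^ b *
    pencilPoly (-rightCommutator R F) (LinearMap.mulRight R F) l (m - b)
      (rightCommutator R G (F ^ b))

lemma eval_flowLinPoly (r : R) (m : ℕ) :
    (flowLinPoly F G l m).eval r = (flowPoly F G l r (m + 1)).coeff 1 := by
  rw [flowLinPoly, eval_finsetSum, flowPoly, coeff_one_pencilPoly]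
  refine Finset.sum_congr rfl fun b _ => ?_
  rw [eval_mul, eval_pow, eval_X, eval_pencilPoly,
    neg_rightCommutator_add_smul_mulRight_pow_apply_one]
  simp only [map_smul, smul_eq_mul]

/-- The term `b = 0` vanishes because `⁅1, G⁆ = 0`, so `r` first occurs in the term `b = 1`. -/
lemma coeff_one_flowLinPoly {m : ℕ} (hm : m ≠ 0) :
    (flowLinPoly F G l m).coeff 1 = l (((-rightCommutator R F) ^ m) G) := by
  obtain ⟨k, rfl⟩ := Nat.exists_eq_succ_of_ne_zero hm
  have hbracket : rightCommutator R G F = -rightCommutator R F G := by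
    rw [rightCommutator_apply, rightCommutator_apply, neg_sub]
  rw [flowLinPoly, finsetSum_coeff, Finset.sum_range_succ', Finset.sum_range_succ']
  have htail : ∀ b ∈ Finset.range k, (X ^ (b + 1 + 1) * pencilPoly (-rightCommutator R F)
      (LinearMap.mulRight R F) l (k + 1 - (b + 1 + 1))
      (rightCommutator R G (F ^ (b + 1 + 1)))).coeff 1 = 0 := fun b _ => by
    rw [coeff_X_pow_mul', if_neg (by lia)]
  rw [Finset.sum_eq_zero htail]
  simp [rightCommutator_one, pencilPoly_zero, coeff_X_mul, coeff_zero_pencilPoly, hbracket,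
    pow_succ]

end ExpMul

section Sign

variable {A : Type*} [Ring A] [Algebra ℝ A] {F G : A} {l : A →ₗ[ℝ] ℝ} {N : ℕ}

lemma exists_flowPoly_eval_neg (hN : N ≠ 0)
    (h : l (F ^ (N + 1)) < 0 ∨
      (Odd N ∧ l ((rightCommutator ℝ G ^ N) F) ≠ 0) ∨
      l ((rightCommutator ℝ G ^ N) F) < 0 ∨
      (l (F ^ (N + 1)) = 0 ∧ l ((rightCommutator ℝ F ^ N) G) ≠ 0)) :
    ∃ r > 1, ∃ v, (flowPoly F G l r (N + 1)).eval v < 0 := by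
  rcases h with hneg | ⟨hodd, hne⟩ | hneg | ⟨hzero, hne⟩
  · refine ⟨2, one_lt_two, 0, ?_⟩
    rw [← coeff_zero_eq_eval_zero, coeff_zero_flowPoly]
    exact mul_neg_of_pos_of_neg (by positivity) hneg
  · refine ⟨2, one_lt_two, exists_eval_neg_of_odd_of_coeff_ne_zero hodd
      (natDegree_flowPoly_succ_le ..) ?_⟩
    rw [coeff_flowPoly_succ_self]
    exact mul_ne_zero two_ne_zero hne
  · refine ⟨2, one_lt_two, exists_eval_neg_of_coeff_neg (Nat.pos_of_ne_zero hN)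
      (natDegree_flowPoly_succ_le ..) ?_⟩
    rw [coeff_flowPoly_succ_self]
    exact mul_neg_of_pos_of_neg two_pos hneg
  · have hlin : flowLinPoly F G l N ≠ 0 := fun h => by
      have hcoeff := coeff_one_flowLinPoly F G l hN
      rw [h, coeff_zero, ← neg_one_smul ℝ (rightCommutator ℝ F), _root_.smul_pow,
        LinearMap.smul_apply, map_smul] at hcoeff
      exact smul_ne_zero (pow_ne_zero N (neg_ne_zero.2 one_ne_zero)) hne hcoeff.symm
    obtain ⟨r, hr, hrne⟩ := exists_gt_eval_ne_zero hlin 1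
    refine ⟨r, hr, exists_eval_neg_of_coeff_one_ne_zero ?_ (eval_flowLinPoly F G l r N ▸ hrne)⟩
    rw [coeff_zero_flowPoly, hzero, mul_zero]

lemma exists_expMulCoeff_neg (hN : N ≠ 0)
    (h : l (F ^ (N + 1)) < 0 ∨
      (Odd N ∧ l ((rightCommutator ℝ G ^ N) F) ≠ 0) ∨
      l ((rightCommutator ℝ G ^ N) F) < 0 ∨
      (l (F ^ (N + 1)) = 0 ∧ l ((rightCommutator ℝ F ^ N) G) ≠ 0)) :
    ∃ ρ > 0, ∃ u : ℝ, l (expMulCoeff (F - (ρ * u) • G) (ρ • (F + u • G)) (N + 1)) < 0 := by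
  obtain ⟨r, hr, v, hv⟩ := exists_flowPoly_eval_neg hN h
  have hρ : 0 < r - 1 := sub_pos.2 hr
  refine ⟨r - 1, hρ, v / (r - 1), ?_⟩
  rwa [← eval_flowPoly, add_sub_cancel, mul_div_cancel₀ _ hρ.ne']

end Sign

end Algebra

section Flow

open Asymptotics
open scoped Topology Nat

lemma sum_smul_expMulCoeff {A : Type*} [Ring A] [Algebra ℝ A] (B C : A) (t : ℝ) (m : ℕ) :
    ∑ k ∈ Finset.range m, ((k ! : ℝ)⁻¹ * t ^ k) • expMulCoeff B C k =
      ∑ j ∈ Finset.range m, ((j ! : ℝ)⁻¹ * t ^ j) •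
        ∑ i ∈ Finset.range (m - j), ((i ! : ℝ)⁻¹ * t ^ i) • (B ^ i * C ^ j) := by
  simp only [expMulCoeff, Finset.smul_sum]
  rw [← Finset.sum_range_diag_flip]
  refine Finset.sum_congr rfl fun k _ => Finset.sum_congr rfl fun j hj => ?_
  have hjk : j ≤ k := Finset.mem_range_succ_iff.1 hj
  rw [← Nat.cast_smul_eq_nsmul ℝ, smul_smul, smul_smul, Nat.cast_choose ℝ hjk]
  congr 1
  rw [← Nat.add_sub_of_le hjk, pow_add, Nat.add_sub_cancel_left]
  field_simp

section IntegralCurve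

variable {ι E : Type*} [NormedAddCommGroup E] [NormedSpace ℝ E] {X : E → E}

lemma norm_sub_le_of_isIntegralCurveOn {γ : ℝ → E} {K T t : ℝ}
    (hγ : IsIntegralCurveOn γ (fun _ => X) (Icc 0 T))
    (hX : ∀ z ∈ Metric.closedBall (γ 0) (K * T), ‖X z‖ < K) (hK : 0 ≤ K)
    (ht : t ∈ Icc 0 T) :
    ‖γ t - γ 0‖ ≤ K * t := by
  have hderiv : ∀ τ ∈ Ico 0 T, HasDerivWithinAt (fun τ => γ τ - γ 0) (X (γ τ)) (Ici τ) τ :=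
    fun τ hτ => ((hγ τ (Ico_subset_Icc_self hτ)).mono_of_mem_nhdsWithin
      (Icc_mem_nhdsGE_of_mem hτ)).sub_const _
  have hcont : ContinuousOn (fun τ => γ τ - γ 0) (Icc 0 T) :=
    hγ.continuousOn.sub continuousOn_const
  refine image_norm_le_of_norm_deriv_right_lt_deriv_boundary (B := fun τ => K * τ)
    (B' := fun _ => K) hcont hderiv (by simp)
    (fun τ => by simpa using (hasDerivAt_id τ).const_mul K) (fun τ hτ hbd => hX _ ?_) ht
  rw [mem_closedBall_iff_norm, hbd]
  exact mul_le_mul_of_nonneg_left hτ.2.le hK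

variable {l : Filter ι} {γ : ι → ℝ → E} {s : ι → ℝ} {x₀ : E}

lemma eventually_mapsTo_of_isIntegralCurveOn (hX : ContinuousAt X x₀)
    (hγ : ∀ᶠ i in l, IsIntegralCurveOn (γ i) (fun _ => X) (Icc 0 (s i)))
    (hγ₀ : Tendsto (fun i => γ i 0) l (𝓝 x₀)) (hs : Tendsto s l (𝓝 0)) {U : Set E}
    (hU : U ∈ 𝓝 x₀) : ∀ᶠ i in l, MapsTo (γ i) (Icc 0 (s i)) U := by
  set K := ‖X x₀‖ + 1
  have hKpos : 0 < K := by positivity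
  have hXK : ∀ᶠ z in 𝓝 x₀, ‖X z‖ < K := hX.norm.eventually_lt_const (lt_add_one _)
  obtain ⟨ε, hε, hball⟩ := Metric.mem_nhds_iff.1 (inter_mem hXK hU)
  have hsK : Tendsto (fun i => K * s i) l (𝓝 0) := by simpa using hs.const_mul K
  filter_upwards [hγ, hsK.eventually_lt_const (half_pos hε),
    hγ₀.eventually (Metric.ball_mem_nhds x₀ (half_pos hε))] with i hcurve hsmall hstart
  have hsub : Metric.closedBall (γ i 0) (K * s i) ⊆ Metric.ball x₀ ε :=
    Metric.closedBall_subset_ball' (by linarith [Metric.mem_ball.1 hstart])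
  intro τ hτ
  refine (hball (hsub ?_)).2
  rw [mem_closedBall_iff_norm]
  exact (norm_sub_le_of_isIntegralCurveOn hcurve (fun z hz => (hball (hsub hz)).1) hKpos.le
    hτ).trans (mul_le_mul_of_nonneg_left hτ.2 hKpos.le)

end IntegralCurve

section SmoothMaps

variable {E F : Type*} [NormedAddCommGroup E] [NormedSpace ℝ E] [NormedAddCommGroup F]
  [NormedSpace ℝ F]

variable (E F) in
/-- The space of `C^∞` maps `E → F`; vector fields are the case `F = E`. -/
def smoothMaps : Submodule ℝ (E → F) where
  carrier := {W | ContDiff ℝ (⊤ : ℕ∞) W}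
  add_mem' hV hW := mem_ofPred.2 ((mem_ofPred.1 hV).add (mem_ofPred.1 hW))
  zero_mem' := mem_ofPred.2 contDiff_const
  smul_mem' c _ hW := mem_ofPred.2 ((mem_ofPred.1 hW).const_smul c)

lemma contDiff_smoothMaps (W : smoothMaps E F) : ContDiff ℝ (⊤ : ℕ∞) W.1 := W.2

lemma differentiableAt_smoothMaps (W : smoothMaps E F) (x : E) : DifferentiableAt ℝ W.1 x :=
  (contDiff_smoothMaps W).contDiffAt.differentiableAt (by simp)

/-- The derivation `W ↦ (x ↦ DW(x)·X(x))` along a vector field, as an operator on smooth maps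
depending linearly on the vector field. -/
def lieDeriv : smoothMaps E E →ₗ[ℝ] Module.End ℝ (smoothMaps E F) :=
  LinearMap.mk₂ ℝ
    (fun X W => ⟨fun x => fderiv ℝ W.1 x (X.1 x),
      ((contDiff_smoothMaps W).fderiv_right (by simp)).clm_apply (contDiff_smoothMaps X)⟩)
    (fun _ _ _ => by ext; simp)
    (fun _ _ _ => by ext; simp)
    (fun _ W W' => by
      ext x
      simp [fderiv_add (differentiableAt_smoothMaps W x) (differentiableAt_smoothMaps W' x)])
    (fun _ _ W => by
      ext x
      simp [fderiv_const_smul (differentiableAt_smoothMaps W x)])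

lemma lieBracket_mem_smoothMaps (X Y : smoothMaps E E) :
    VectorField.lieBracket ℝ X.1 Y.1 ∈ smoothMaps E E :=
  (contDiff_smoothMaps X).lieBracket_vectorField (m := (⊤ : ℕ∞)) (contDiff_smoothMaps Y) le_rfl

lemma lieDeriv_lieBracket (X Y : smoothMaps E E) :
    lieDeriv (F := F) ⟨VectorField.lieBracket ℝ X.1 Y.1, lieBracket_mem_smoothMaps X Y⟩ =
      lieDeriv X * lieDeriv Y - lieDeriv Y * lieDeriv X := by
  ext W x
  exact VectorField.fderiv_apply_lieBracket (contDiff_smoothMaps W).contDiffAt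
    (by simpa using ENat.LEInfty.out) (differentiableAt_smoothMaps Y x)
    (differentiableAt_smoothMaps X x)

lemma iteratedDerivWithin_comp_integralCurve {γ : ℝ → E} {s : Set ℝ} (hs : UniqueDiffOn ℝ s)
    {X : smoothMaps E E} (hγ : IsIntegralCurveOn γ (fun _ => X.1) s) (W : smoothMaps E F) (j : ℕ) :
    EqOn (iteratedDerivWithin j (W.1 ∘ γ) s) (((lieDeriv X ^ j) W).1 ∘ γ) s := by
  induction j with
  | zero => simp [EqOn]
  | succ j ih =>
    intro t ht
    rw [iteratedDerivWithin_succ, derivWithin_congr ih (ih ht), pow_succ']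
    exact ((differentiableAt_smoothMaps _ _).hasFDerivAt.comp_hasDerivWithinAt t
      (hγ t ht)).derivWithin (hs t ht)

lemma contDiffOn_comp_integralCurve {γ : ℝ → E} {s : Set ℝ} (hs : UniqueDiffOn ℝ s)
    {X : smoothMaps E E} (hγ : IsIntegralCurveOn γ (fun _ => X.1) s) (W : smoothMaps E F) :
    ContDiffOn ℝ (⊤ : ℕ∞) (W.1 ∘ γ) s := by
  refine contDiffOn_of_differentiableOn_deriv fun j _ => DifferentiableOn.congr (fun t ht => ?_)
    (iteratedDerivWithin_comp_integralCurve hs hγ W j)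
  exact (differentiableAt_smoothMaps _ _).comp_differentiableWithinAt t
    (hγ t ht).differentiableWithinAt

variable {ι : Type*} {l : Filter ι} {x₀ : E}

lemma isBigO_comp_integralCurve_sub_taylor {γ : ι → ℝ → E} {s : ι → ℝ} {X : smoothMaps E E}
    (hγ : ∀ᶠ i in l, IsIntegralCurveOn (γ i) (fun _ => X.1) (Icc 0 (s i)))
    (hγ₀ : Tendsto (fun i => γ i 0) l (𝓝 x₀)) (hs : Tendsto s l (𝓝[>] 0)) (W : smoothMaps E F)
    (m : ℕ) :
    (fun i => W.1 (γ i (s i)) - ∑ j ∈ Finset.range (m + 1),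
      ((j ! : ℝ)⁻¹ * s i ^ j) • ((lieDeriv X ^ j) W).1 (γ i 0)) =O[l] fun i => s i ^ (m + 1) := by
  obtain ⟨hs₀, hspos⟩ := tendsto_nhdsWithin_iff.1 hs
  set W' := ((lieDeriv X ^ (m + 1)) W).1
  have hbdd : ∀ᶠ z in 𝓝 x₀, ‖W' z‖ < ‖W' x₀‖ + 1 :=
    (differentiableAt_smoothMaps _ _).continuousAt.norm.eventually_lt_const (lt_add_one _)
  refine .of_bound ((‖W' x₀‖ + 1) / m !) ?_
  filter_upwards [hγ, hspos, eventually_mapsTo_of_isIntegralCurveOn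
    (differentiableAt_smoothMaps X x₀).continuousAt hγ hγ₀ hs₀ hbdd] with i hcurve hi hmaps
  rw [mem_Ioi] at hi
  have hud := uniqueDiffOn_Icc hi
  have htaylor := taylor_mean_remainder_bound hi.le
    ((contDiffOn_comp_integralCurve hud hcurve W).of_le (mod_cast le_top))
    (right_mem_Icc.2 hi.le) (n := m) (C := ‖W' x₀‖ + 1) fun τ hτ => by
      rw [iteratedDerivWithin_comp_integralCurve hud hcurve W _ hτ]
      exact (hmaps hτ).le
  have hcoeff : ∀ j, iteratedDerivWithin j (W.1 ∘ γ i) (Icc 0 (s i)) 0 =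
      ((lieDeriv X ^ j) W).1 (γ i 0) := fun j =>
    iteratedDerivWithin_comp_integralCurve hud hcurve W j (left_mem_Icc.2 hi.le)
  simp only [taylor_within_apply, hcoeff, sub_zero] at htaylor
  rw [Real.norm_of_nonneg (by positivity), div_mul_eq_mul_div]
  exact htaylor

/-- Evaluation `T ↦ (T W)(x)` of operators on smooth maps, as a linear functional. -/
def evalOperator (W : smoothMaps E F) (x : E) : Module.End ℝ (smoothMaps E F) →ₗ[ℝ] F :=
  LinearMap.proj x ∘ₗ (smoothMaps E F).subtype ∘ₗ LinearMap.applyₗ W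

lemma evalOperator_apply (W : smoothMaps E F) (x : E) (T : Module.End ℝ (smoothMaps E F)) :
    evalOperator W x T = (T W).1 x := rfl

lemma isBigO_comp_flow_sub_expMulCoeff {X Y : smoothMaps E E} {ψ : ℝ → E} {γ : ℝ → ℝ → E}
    (hψ₀ : ψ 0 = x₀) (hψ : ∀ᶠ t in 𝓝[>] 0, IsIntegralCurveOn ψ (fun _ => Y.1) (Icc 0 t))
    (hγ₀ : ∀ᶠ t in 𝓝[>] 0, γ t 0 = ψ t)
    (hγ : ∀ᶠ t in 𝓝[>] 0, IsIntegralCurveOn (γ t) (fun _ => X.1) (Icc 0 t))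
    (W : smoothMaps E F) (m : ℕ) :
    (fun t => W.1 (γ t t) - ∑ k ∈ Finset.range (m + 1), ((k ! : ℝ)⁻¹ * t ^ k) •
      evalOperator W x₀ (expMulCoeff (lieDeriv Y) (lieDeriv X) k)) =O[𝓝[>] 0]
      fun t => t ^ (m + 1) := by
  have hψlim : Tendsto ψ (𝓝[>] 0) (𝓝 x₀) := by
    obtain ⟨t, ht, htpos⟩ := (hψ.and self_mem_nhdsWithin).exists
    have hcont := (ht 0 (left_mem_Icc.2 (le_of_lt htpos))).continuousWithinAt
    rw [ContinuousWithinAt, hψ₀] at hcont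
    exact hcont.mono_left (nhdsWithin_le_of_mem (Icc_mem_nhdsGT_of_mem ⟨le_rfl, htpos⟩))
  have houter := isBigO_comp_integralCurve_sub_taylor hγ
    (hψlim.congr' (hγ₀.mono fun _ h => h.symm)) tendsto_id W m
  have hinner : ∀ j ∈ Finset.range (m + 1), (fun t => ((j ! : ℝ)⁻¹ * t ^ j) •
      (((lieDeriv X ^ j) W).1 (ψ t) - ∑ i ∈ Finset.range (m + 1 - j), ((i ! : ℝ)⁻¹ * t ^ i) •
        evalOperator W x₀ (lieDeriv Y ^ i * lieDeriv X ^ j))) =O[𝓝[>] 0]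
      fun t => t ^ (m + 1) := by
    intro j hj
    have hjm : j ≤ m := Finset.mem_range_succ_iff.1 hj
    have htaylor := isBigO_comp_integralCurve_sub_taylor (γ := fun _ => ψ) (x₀ := x₀)
      hψ (by simpa only [hψ₀] using tendsto_const_nhds) tendsto_id ((lieDeriv X ^ j) W) (m - j)
    rw [← Nat.sub_add_comm hjm, hψ₀] at htaylor
    refine ((isBigO_const_mul_self (j ! : ℝ)⁻¹ (fun t => t ^ j) _).smul htaylor).congr_right
      fun t => ?_
    rw [smul_eq_mul, ← pow_add, Nat.add_sub_of_le (hjm.trans m.le_succ)]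
  refine (houter.add (IsBigO.sum hinner)).congr' ?_ .rfl
  filter_upwards [hγ₀] with t ht
  simp only [Finset.sum_apply, ht, smul_sub, Finset.sum_sub_distrib, sub_add_sub_cancel, ← map_smul,
    ← map_sum, sum_smul_expMulCoeff]

lemma eventually_lt_of_isBigO_sub {w : ℝ → ℝ} {a c : ℝ} {k : ℕ} (hc : c < 0)
    (h : (fun t => w t - (a + t ^ k * c)) =O[𝓝[>] 0] fun t => t ^ (k + 1)) :
    ∀ᶠ t in 𝓝[>] 0, w t < a := by
  have hpow : (fun t : ℝ => t ^ (k + 1)) =o[𝓝[>] 0] fun t => t ^ k :=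
    (isLittleO_pow_pow k.lt_succ_self).mono nhdsWithin_le_nhds
  filter_upwards [(h.trans_isLittleO hpow).bound (neg_pos.2 hc |> half_pos), self_mem_nhdsWithin]
    with t ht htpos
  have hk : 0 < t ^ k := pow_pos htpos k
  rw [Real.norm_eq_abs, Real.norm_of_nonneg hk.le] at ht
  nlinarith [le_of_abs_le ht]


lemma eventually_comp_flow_lt {X Y : smoothMaps E E} {ψ : ℝ → E} {γ : ℝ → ℝ → E}
    (hψ₀ : ψ 0 = x₀) (hψ : ∀ᶠ t in 𝓝[>] 0, IsIntegralCurveOn ψ (fun _ => Y.1) (Icc 0 t))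
    (hγ₀ : ∀ᶠ t in 𝓝[>] 0, γ t 0 = ψ t)
    (hγ : ∀ᶠ t in 𝓝[>] 0, IsIntegralCurveOn (γ t) (fun _ => X.1) (Icc 0 t))
    {V : smoothMaps E ℝ} {N : ℕ}
    (hzero : ∀ k, 1 ≤ k → k ≤ N →
      evalOperator V x₀ (expMulCoeff (lieDeriv Y) (lieDeriv X) k) = 0)
    (hneg : evalOperator V x₀ (expMulCoeff (lieDeriv Y) (lieDeriv X) (N + 1)) < 0) :
    ∀ᶠ t in 𝓝[>] 0, V.1 (γ t t) < V.1 x₀ := by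
  have hsum : ∀ t : ℝ, ∑ k ∈ Finset.range (N + 1 + 1), ((k ! : ℝ)⁻¹ * t ^ k) •
      evalOperator V x₀ (expMulCoeff (lieDeriv Y) (lieDeriv X) k) = V.1 x₀ + t ^ (N + 1) *
        (((N + 1)! : ℝ)⁻¹ *
          evalOperator V x₀ (expMulCoeff (lieDeriv Y) (lieDeriv X) (N + 1))) := fun t => by
    have hmiddle : ∀ k ∈ Finset.range N, (((k + 1)! : ℝ)⁻¹ * t ^ (k + 1)) •
        evalOperator V x₀ (expMulCoeff (lieDeriv Y) (lieDeriv X) (k + 1)) = 0 := fun k hk => by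
      rw [hzero _ k.succ_pos (Finset.mem_range.1 hk), smul_zero]
    rw [Finset.sum_range_succ, Finset.sum_range_succ', Finset.sum_eq_zero hmiddle, smul_eq_mul]
    simp only [expMulCoeff_zero, evalOperator_apply, Module.End.one_apply, Nat.factorial_zero,
      Nat.cast_one, inv_one, pow_zero, mul_one, zero_add]
    ring
  have htaylor := isBigO_comp_flow_sub_expMulCoeff hψ₀ hψ hγ₀ hγ V (N + 1)
  simp only [hsum] at htaylor
  exact eventually_lt_of_isBigO_sub (mul_neg_of_pos_of_neg (by positivity) hneg) htaylor

lemma exists_forall_comp_flow_lt {X Y : smoothMaps E E} {V : smoothMaps E ℝ} {ρ δ : ℝ} {N : ℕ}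
    (hρ : 0 < ρ) (hδ : 0 < δ) {ψ : ℝ → E} {γ : ℝ → ℝ → E} (hψ₀ : ψ 0 = x₀)
    (hψ : IsIntegralCurveOn ψ (fun _ => Y.1) (Ico 0 δ)) (hγ₀ : ∀ t ∈ Ico 0 δ, γ t 0 = ψ t)
    (hγ : ∀ t ∈ Ico 0 δ, IsIntegralCurveOn (γ t) (fun _ => X.1) (Ico 0 δ))
    (hzero : ∀ k, 1 ≤ k → k ≤ N →
      evalOperator V x₀ (expMulCoeff (lieDeriv Y) (lieDeriv (ρ • X)) k) = 0)
    (hneg : evalOperator V x₀ (expMulCoeff (lieDeriv Y) (lieDeriv (ρ • X)) (N + 1)) < 0) :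
    ∃ σ > 0, σ < δ ∧ ρ * σ < δ ∧ ∀ t, 0 < t → t ≤ σ → V.1 (γ t (ρ * t)) < V.1 x₀ := by
  have hsmall : ∀ᶠ t in 𝓝[>] (0 : ℝ), 0 < t ∧ t < δ ∧ ρ * t < δ := by
    have hρt : Tendsto (fun t => ρ * t) (𝓝[>] 0) (𝓝 0) := by
      simpa using (tendsto_id.const_mul ρ).mono_left (nhdsWithin_le_nhds (a := (0 : ℝ)))
    filter_upwards [self_mem_nhdsWithin, Ioo_mem_nhdsGT hδ, hρt.eventually_lt_const hδ]
      with t htpos ht hρt using ⟨htpos, ht.2, hρt⟩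
  have hdecrease : ∀ᶠ t in 𝓝[>] 0, V.1 (γ t (t * ρ)) < V.1 x₀ := by
    refine eventually_comp_flow_lt (X := ρ • X) (γ := fun t s => γ t (s * ρ)) hψ₀ ?_ ?_ ?_
      hzero hneg
    · filter_upwards [hsmall] with t ht using hψ.mono (Icc_subset_Ico_right ht.2.1)
    · filter_upwards [hsmall] with t ht
      rw [zero_mul, hγ₀ t ⟨ht.1.le, ht.2.1⟩]
    · filter_upwards [hsmall] with t ht
      refine ((hγ t ⟨ht.1.le, ht.2.1⟩).comp_mul ρ).mono fun s hs => ?_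
      exact ⟨mul_nonneg hs.1 hρ.le, by nlinarith [hs.2, ht.2.2]⟩
  obtain ⟨σ, hσ, hIoc⟩ := mem_nhdsGT_iff_exists_Ioc_subset.1 (hsmall.and hdecrease)
  obtain ⟨⟨-, hσδ, hρσ⟩, -⟩ := hIoc (right_mem_Ioc.2 hσ)
  exact ⟨σ, hσ, hσδ, hρσ, fun t ht htσ => mul_comm ρ t ▸ (hIoc ⟨ht, htσ⟩).2⟩

theorem stmt13_general {f g : smoothMaps E E} {V : smoothMaps E ℝ} {N : ℕ} (hN : N ≠ 0)
    (hzero : ∀ m, 1 ≤ m → m ≤ N → ∀ T ∈ Submodule.span ℝ {lieDeriv f, lieDeriv g} ^ m,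
      evalOperator V x₀ T = 0)
    (hP : evalOperator V x₀ (lieDeriv f ^ (N + 1)) < 0 ∨
      (Odd N ∧ evalOperator V x₀ ((rightCommutator ℝ (lieDeriv g) ^ N) (lieDeriv f)) ≠ 0) ∨
      evalOperator V x₀ ((rightCommutator ℝ (lieDeriv g) ^ N) (lieDeriv f)) < 0 ∨
      (evalOperator V x₀ (lieDeriv f ^ (N + 1)) = 0 ∧
        evalOperator V x₀ ((rightCommutator ℝ (lieDeriv f) ^ N) (lieDeriv g)) ≠ 0)) :
    ∃ ρ > 0, ∃ u : ℝ, ∀ (ψ : ℝ → E) (γ : ℝ → ℝ → E) (δ : ℝ), 0 < δ → ψ 0 = x₀ →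
      IsIntegralCurveOn ψ (fun _ => (f - (ρ * u) • g).1) (Ico 0 δ) →
      (∀ t ∈ Ico 0 δ, γ t 0 = ψ t) →
      (∀ t ∈ Ico 0 δ, IsIntegralCurveOn (γ t) (fun _ => (f + u • g).1) (Ico 0 δ)) →
      ∃ σ > 0, σ < δ ∧ ρ * σ < δ ∧ ∀ t, 0 < t → t ≤ σ → V.1 (γ t (ρ * t)) < V.1 x₀ := by
  obtain ⟨ρ, hρ, u, hneg⟩ :=
    exists_expMulCoeff_neg (A := Module.End ℝ (smoothMaps E ℝ)) (l := evalOperator V x₀) hN hP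
  refine ⟨ρ, hρ, u, fun ψ γ δ hδ hψ₀ hψ hγ₀ hγ => ?_⟩
  have hmem : ∀ k, expMulCoeff (lieDeriv (F := ℝ) (f - (ρ * u) • g)) (lieDeriv (ρ • (f + u • g))) k
      ∈ Submodule.span ℝ {lieDeriv f, lieDeriv g} ^ k := fun k => by
    simpa only [map_smul, map_add, map_sub] using
      expMulCoeff_mem_span_pow (lieDeriv (F := ℝ) f) (lieDeriv g) ρ u k
  exact exists_forall_comp_flow_lt hρ hδ hψ₀ hψ hγ₀ hγ
    (fun k hk hkN => hzero k hk hkN _ (hmem k))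
    (by simpa only [map_smul, map_add, map_sub] using hneg)

end SmoothMaps

end Flow

section Euclidean

open scoped Pointwise

variable {n : ℕ}

lemma iterD_eq_lieDeriv_pow (f : smoothMaps (Euc n) (Euc n)) (V : smoothMaps (Euc n) ℝ) (i : ℕ) :
    iterD f.1 V.1 i = ((lieDeriv f ^ i) V).1 := by
  induction i with
  | zero => rfl
  | succ i ih => rw [iterD, ih, pow_succ']; rfl

lemma exists_lieDeriv_adIter (f g : smoothMaps (Euc n) (Euc n)) (k : ℕ) :
    ∃ h : adIter f.1 g.1 k ∈ smoothMaps (Euc n) (Euc n),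
      lieDeriv (F := ℝ) ⟨adIter f.1 g.1 k, h⟩ =
        (rightCommutator ℝ (lieDeriv g) ^ k) (lieDeriv f) := by
  induction k with
  | zero => exact ⟨f.2, rfl⟩
  | succ k ih =>
    obtain ⟨h, hk⟩ := ih
    refine ⟨lieBracket_mem_smoothMaps ⟨_, h⟩ g, ?_⟩
    rw [pow_succ', Module.End.mul_apply, ← hk, rightCommutator_apply]
    exact lieDeriv_lieBracket ⟨_, h⟩ g

lemma vfD_adIter_eq_evalOperator (f g : smoothMaps (Euc n) (Euc n)) (V : smoothMaps (Euc n) ℝ)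
    (k : ℕ) (x : Euc n) :
    vfD (adIter f.1 g.1 k) V.1 x =
      evalOperator V x ((rightCommutator ℝ (lieDeriv g) ^ k) (lieDeriv f)) := by
  obtain ⟨h, hk⟩ := exists_lieDeriv_adIter f g k
  rw [← hk]
  rfl

lemma applyVFs_map_smul (c : VF n → ℝ) (L : List (VF n)) (V : Euc n → ℝ) :
    applyVFs (L.map fun X => c X • X) V = (L.map c).prod • applyVFs L V := by
  induction L with
  | nil => simp [applyVFs]
  | cons X L ih =>
    ext x
    simp [applyVFs, ih, vfD, fderiv_const_smul_field]
    ring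

lemma applyVFs_eq_zero_of_zero_mem {L : List (VF n)} (hL : 0 ∈ L) (V : Euc n → ℝ) :
    applyVFs L V = 0 := by
  induction L with
  | nil => simp at hL
  | cons X L ih =>
    ext x
    rcases List.mem_cons.1 hL with rfl | hL
    · simp [applyVFs, vfD]
    · simp [applyVFs, vfD, ih hL]

/-- The letter `g` is excluded in `LieCondZero`, but `2 • g` is not. -/
lemma applyVFs_eq_zero_of_lieCondZero {f g : VF n} {V : Euc n → ℝ} {x : Euc n} {N : ℕ}
    (h : LieCondZero f g V x N) {L : List (VF n)} (hL : ∀ X ∈ L, X = f ∨ X = g) (hne : L ≠ [])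
    (hlen : L.length ≤ N) : applyVFs L V x = 0 := by
  classical
  by_cases hL₀ : (0 : VF n) ∈ L
  · rw [applyVFs_eq_zero_of_zero_mem hL₀, Pi.zero_apply]
  set c : VF n → ℝ := fun X => if X = g then 2 else 1 with hc
  have hc₀ : ∀ X, c X ≠ 0 := fun X => by simp only [hc]; split_ifs <;> norm_num
  have hcg : ∀ X ≠ 0, c X • X ≠ g := fun X hX hXg => by
    simp only [hc] at hXg
    split_ifs at hXg with hXeq
    · exact hX (by simpa [two_smul, hXeq] using hXg)
    · exact hXeq (by simpa using hXg)
  have hvanish := h (L.map fun X => c X • X) (List.replicate L.length 1)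
    (by simpa using hne) (by simp) (fun p hp => ?_) (by simpa using hlen)
  · rw [applyVFs_map_smul, Pi.smul_apply, smul_eq_mul] at hvanish
    exact (mul_eq_zero.1 hvanish).resolve_left
      (List.prod_ne_zero (by simpa using fun X _ => hc₀ X))
  · obtain ⟨hp₁, hp₂⟩ := List.of_mem_zip hp
    obtain ⟨X, hX, hXp⟩ := List.mem_map.1 hp₁
    have hX₀ : X ≠ 0 := fun h => hL₀ (h ▸ hX)
    have hXmem : c X • X ∈ Lk f g 0 := Submodule.smul_mem _ _ (Submodule.subset_span (hL X hX))
    rw [← hXp, List.eq_of_mem_replicate hp₂]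
    exact ⟨Submodule.mem_iSup_of_mem 0 hXmem, hcg X hX₀, hXmem, smul_ne_zero (hc₀ X) hX₀⟩

lemma exists_applyVFs_of_mem_pow {f g : smoothMaps (Euc n) (Euc n)} (V : smoothMaps (Euc n) ℝ)
    {m : ℕ} {T : Module.End ℝ (smoothMaps (Euc n) ℝ)}
    (hT : T ∈ ({lieDeriv f, lieDeriv g} : Set (Module.End ℝ (smoothMaps (Euc n) ℝ))) ^ m) :
    ∃ L : List (VF n), L.length = m ∧ (∀ X ∈ L, X = f.1 ∨ X = g.1) ∧
      (T V).1 = applyVFs L V.1 := by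
  induction m generalizing T with
  | zero =>
    obtain rfl : T = 1 := by simpa using hT
    exact ⟨[], rfl, by simp, rfl⟩
  | succ m ih =>
    rw [pow_succ'] at hT
    obtain ⟨D, hD, S, hS, rfl⟩ := Set.mem_mul.1 hT
    obtain ⟨L, hlen, hL, hSV⟩ := ih hS
    have hcons : ∀ X : smoothMaps (Euc n) (Euc n),
        (lieDeriv X (S V)).1 = applyVFs (X.1 :: L) V.1 := fun X => by
      rw [applyVFs, ← hSV]
      rfl
    rcases hD with rfl | rfl
    · exact ⟨f.1 :: L, by simp [hlen], by simpa using hL, hcons f⟩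
    · exact ⟨g.1 :: L, by simp [hlen], by simpa using hL, hcons g⟩

lemma evalOperator_eq_zero_of_lieCondZero {f g : smoothMaps (Euc n) (Euc n)}
    {V : smoothMaps (Euc n) ℝ} {x : Euc n} {N m : ℕ} (h : LieCondZero f.1 g.1 V.1 x N)
    (hm : 1 ≤ m) (hmN : m ≤ N) {T : Module.End ℝ (smoothMaps (Euc n) ℝ)}
    (hT : T ∈ Submodule.span ℝ {lieDeriv f, lieDeriv g} ^ m) : evalOperator V x T = 0 := by
  rw [Submodule.span_pow] at hT
  refine (Submodule.span_le (p := LinearMap.ker (evalOperator V x))).2 (fun S hS => ?_) hT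
  obtain ⟨L, hlen, hL, hSV⟩ := exists_applyVFs_of_mem_pow V hS
  rw [SetLike.mem_coe, LinearMap.mem_ker, evalOperator_apply, hSV]
  exact applyVFs_eq_zero_of_lieCondZero h hL (List.length_pos_iff.1 (by lia)) (by lia)

end Euclidean

/-- Under the Lie algebraic vanishing conditions up to order `N`
at `x₀` together with one of the properties (P1)–(P4), there exist constants
`ρ > 0`, `u₁` and `σ > 0` such that `V(X_{ρt}(Y_t(x₀))) < V(x₀)` for `t ∈ (0,σ]`,
where `X = f + u₁g` and `Y = f − ρu₁g`. -/
theorem stmt13 {n : ℕ} (f g : VF n) (V : Euc n → ℝ)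
    (hf : ContDiff ℝ (⊤ : ℕ∞) f) (hg : ContDiff ℝ (⊤ : ℕ∞) g) (hf0 : f 0 = 0)
    (hV : ContDiff ℝ (⊤ : ℕ∞) V) (hVnn : ∀ x : Euc n, 0 ≤ V x)
    (x₀ : Euc n) (hx₀ : x₀ ≠ 0) (N : ℕ) (hN : 1 ≤ N)
    (hgV : vfD g V x₀ = 0)
    (hfVi : ∀ i : ℕ, 1 ≤ i → i ≤ N → iterD f V i x₀ = 0)
    (hLie : LieCondZero f g V x₀ N)
    (hP : iterD f V (N + 1) x₀ < 0 ∨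
          (Odd N ∧ vfD (adIter f g N) V x₀ ≠ 0) ∨
          (Even N ∧ vfD (adIter f g N) V x₀ < 0) ∨
          (iterD f V (N + 1) x₀ = 0 ∧ vfD (adIter g f N) V x₀ ≠ 0)) :
    ∃ ρ : ℝ, 0 < ρ ∧ ∃ u₁ : ℝ,
      ∀ (Φ : ℝ → Euc n → Euc n) (ψ : ℝ → Euc n) (δ : ℝ) (U : Set (Euc n)),
        0 < δ → U ∈ nhds x₀ →
        (∀ z ∈ U, Φ 0 z = z) →
        (∀ z ∈ U, ∀ t ∈ Ioo (-δ) δ,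
          HasDerivAt (fun s => Φ s z) (f (Φ t z) + u₁ • g (Φ t z)) t) →
        ψ 0 = x₀ →
        (∀ t ∈ Ioo (-δ) δ, HasDerivAt ψ (f (ψ t) - (ρ * u₁) • g (ψ t)) t) →
        (∀ t ∈ Ioo (-δ) δ, ψ t ∈ U) →
        ∃ σ : ℝ, 0 < σ ∧ σ < δ ∧ ρ * σ < δ ∧
          ∀ t : ℝ, 0 < t → t ≤ σ → V (Φ (ρ * t) (ψ t)) < V x₀ := by
  lift f to smoothMaps (Euc n) (Euc n) using hf
  lift g to smoothMaps (Euc n) (Euc n) using hg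
  lift V to smoothMaps (Euc n) ℝ using hV
  simp only [iterD_eq_lieDeriv_pow, ← evalOperator_apply, vfD_adIter_eq_evalOperator] at hP
  obtain ⟨ρ, hρ, u, hdecrease⟩ := stmt13_general (Nat.one_le_iff_ne_zero.1 hN)
    (fun m hm hmN _ hT => evalOperator_eq_zero_of_lieCondZero hLie hm hmN hT)
    (hP.imp_right (Or.imp_right (Or.imp_left And.right)))
  refine ⟨ρ, hρ, u, fun Φ ψ δ U hδ _ hΦ₀ hΦ hψ₀ hψ hψU => ?_⟩
  have hIoo : Ico 0 δ ⊆ Ioo (-δ) δ := fun t ht => ⟨by linarith [ht.1], ht.2⟩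
  exact hdecrease ψ (fun t s => Φ s (ψ t)) δ hδ hψ₀
    (fun t ht => (hψ t (hIoo ht)).hasDerivWithinAt)
    (fun t ht => hΦ₀ _ (hψU t (hIoo ht)))
    (fun t ht s hs => (hΦ _ (hψU t (hIoo ht)) s (hIoo hs)).hasDerivWithinAt)
end
end
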